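/- arXiv:1911.09921 — 2 statements merged into one kernel-verified Lean document; each statement's English description precedes it below -/
import Mathlib

section
/- Let D be a domain in ℂⁿ and let φ be a psh peak function for a point p ∈ ∂D. Then for any bounded open neighborhood U of p there exist an open neighborhood V ⊂ U of p and a constant m > 0 such that for all z ∈ D ∩ V and all X ∈ ℂⁿ one has K_D(z;X) ≥ e^{mφ(z)} K_{D∩U}(z;X). -/
open Set Metric Filter Topology
open scoped Classical

noncomputable section

/-- `ℂⁿ` with the Euclidean norm. -/
abbrev Cn (n : ℕ) := EuclideanSpace ℂ (Fin n)

/-- A function `u : ℂⁿ → [-∞,∞)` (with values in `EReal`) is plurisubharmonic on `D` if it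
is upper semicontinuous on `D` and satisfies the sub-mean-value inequality on every closed
disc in a complex line contained in `D` (stated via continuous majorants on the boundary
circle, so as to handle the value `-∞`). -/
def PSHOn {n : ℕ} (u : Cn n → EReal) (D : Set (Cn n)) : Prop :=
  UpperSemicontinuousOn u D ∧
  ∀ a ∈ D, ∀ b : Cn n, ∀ r : ℝ, 0 < r →
    (∀ t : ℂ, ‖t‖ ≤ r → a + t • b ∈ D) →
    ∀ g : ℝ → ℝ, Continuous g →
      (∀ θ : ℝ, u (a + ((r : ℂ) * Complex.exp (θ * Complex.I)) • b) ≤ (g θ : EReal)) →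
      u a ≤ (((1 / (2 * Real.pi)) * ∫ θ in (0:ℝ)..(2 * Real.pi), g θ : ℝ) : EReal)

/-- `φ` is a plurisubharmonic peak function for `D` at the boundary point `p`:
`φ` is psh on `D`, `φ(z) → 0` as `z → p` in `D`, and `sup_{D∖U} φ < 0` for every
neighborhood `U` of `p`. -/
def IsPshPeakFn {n : ℕ} (D : Set (Cn n)) (p : Cn n) (φ : Cn n → EReal) : Prop :=
  PSHOn φ D ∧ Tendsto φ (𝓝[D] p) (𝓝 (0 : EReal)) ∧
  ∀ U ∈ 𝓝 p, ∃ c : ℝ, c < 0 ∧ ∀ z ∈ D \ U, φ z ≤ (c : EReal)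

/-- The real exponential extended to `EReal`, with `exp(-∞) = 0` (the value at `⊤`,
irrelevant here, is also set to `0`). -/
def erexp (x : EReal) : ℝ := if x = ⊥ then 0 else if x = ⊤ then 0 else Real.exp x.toReal

/-- The Kobayashi metric of `D`:
`K_D(z;X) = inf {|α| : ∃ f : 𝔻 → D holomorphic, f 0 = z, α • f' 0 = X}`. -/
def kobayashi {n : ℕ} (D : Set (Cn n)) (z X : Cn n) : ℝ :=
  sInf {c : ℝ | ∃ α : ℂ, c = ‖α‖ ∧ ∃ f : ℂ → Cn n,
    DifferentiableOn ℂ f (ball (0:ℂ) 1) ∧ MapsTo f (ball (0:ℂ) 1) D ∧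
    f 0 = z ∧ α • deriv f 0 = X}

/-- Real-valued version of plurisubharmonicity. -/
structure RP {n : ℕ} (u : Cn n → ℝ) (D : Set (Cn n)) : Prop where
  usc : ∀ a ∈ D, UpperSemicontinuousAt u a
  sub : ∀ a ∈ D, ∀ b : Cn n, ∀ r : ℝ, 0 < r →
    (∀ t : ℂ, ‖t‖ ≤ r → a + t • b ∈ D) →
    ∀ g : ℝ → ℝ, Continuous g →
      (∀ θ : ℝ, u (a + ((r : ℂ) * Complex.exp (θ * Complex.I)) • b) ≤ g θ) →
      u a ≤ (1 / (2 * Real.pi)) * ∫ θ in (0:ℝ)..(2 * Real.pi), g θ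

/-- Subharmonicity at a point in the viscosity sense. -/
def VSH (S : ℂ → ℝ) (x : ℂ) : Prop :=
  ∀ k : ℂ → ℂ, (∀ᶠ y in 𝓝 x, DifferentiableAt ℂ k y) → ∀ ε : ℝ, 0 < ε →
    ¬ ∀ᶠ y in 𝓝 x, S y ≤ S x + (k y - k x).re - ε * ‖y - x‖ ^ 2

/-- Submean inequality with a holomorphic majorant plus a constant. -/
lemma RP.sub_hol {n : ℕ} {u : Cn n → ℝ} {D : Set (Cn n)} (hu : RP u D) {a b : Cn n} (ha : a ∈ D)
    {r : ℝ} (hr : 0 < r) (hd : ∀ t : ℂ, ‖t‖ ≤ r → a + t • b ∈ D) (h : ℂ → ℂ)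
    (hh : ∀ t : ℂ, ‖t‖ ≤ r → DifferentiableAt ℂ h t) (C : ℝ)
    (hb : ∀ t : ℂ, ‖t‖ = r → u (a + t • b) ≤ (h t).re + C) : u a ≤ (h 0).re + C := by
  have hnorm : ∀ θ : ℝ, ‖circleMap 0 r θ‖ = r := by
    intro θ; simp [hr.le]
  have hcm : ∀ θ : ℝ, (r : ℂ) * Complex.exp (θ * Complex.I) = circleMap 0 r θ := by
    intro θ; simp [circleMap]
  have hcont : Continuous fun θ : ℝ => h (circleMap 0 r θ) := by
    rw [continuous_iff_continuousAt]
    intro θ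
    exact ContinuousAt.comp (f := fun θ : ℝ => circleMap 0 r θ) (g := h)
      (hh _ (hnorm θ).le).continuousAt (continuous_circleMap 0 r).continuousAt
  have hav : Real.circleAverage h 0 r = h 0 := by
    apply circleAverage_of_differentiable_on_off_countable Set.countable_empty
    · intro t ht
      rw [abs_of_pos hr, mem_closedBall_zero_iff] at ht
      exact (hh t ht).continuousAt.continuousWithinAt
    · intro t ht
      have := ht.1
      rw [abs_of_pos hr, mem_ball_zero_iff] at this
      exact hh t this.le
  have key := hu.sub a ha b r hr hd (fun θ => (h (circleMap 0 r θ)).re + C)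
    ((Complex.continuous_re.comp hcont).add continuous_const) (by
      intro θ
      rw [hcm]
      exact hb _ (hnorm θ))
  refine key.trans (le_of_eq ?_)
  have hre : Continuous fun θ : ℝ => (h (circleMap 0 r θ)).re := Complex.continuous_re.comp hcont
  rw [intervalIntegral.integral_add (hre.intervalIntegrable _ _)
    (continuous_const.intervalIntegrable _ _)]
  have h2 : ∫ θ in (0:ℝ)..(2 * Real.pi), (h (circleMap 0 r θ)).re
      = (∫ θ in (0:ℝ)..(2 * Real.pi), h (circleMap 0 r θ)).re := by
    have := Complex.reCLM.intervalIntegral_comp_comm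
      (hcont.intervalIntegrable (μ := MeasureTheory.volume) 0 (2 * Real.pi))
    simpa using this
  rw [h2]
  rw [Real.circleAverage_def] at hav
  rw [← hav]
  have : (2 * Real.pi : ℝ) ≠ 0 := by positivity
  simp only [Complex.smul_re, smul_eq_mul, intervalIntegral.integral_const]
  field_simp
  ring

lemma vsh_aux {n : ℕ} {u : Cn n → ℝ} {D : Set (Cn n)} (hu : RP u D)
    {f : ℂ → Cn n} {x : ℂ} {k : ℂ → ℂ} {ε r r' : ℝ} (hε : 0 < ε) (hr : 0 < r) (hr' : 0 < r')
    (hball' : closedBall (f x) r' ⊆ D)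
    (hfd : ∀ y ∈ closedBall x r, DifferentiableAt ℂ f y)
    (hkd : ∀ y ∈ closedBall x r, DifferentiableAt ℂ k y)
    (hH : ∀ y ∈ closedBall x r, u (f y) ≤ u (f x) + (k y - k x).re - ε * ‖y - x‖ ^ 2) :
    ∃ N : ℕ, ∃ w ∈ ball (f x) r', ∃ y ∈ ball x r, ∀ w' ∈ closedBall (f x) r',
      ∀ y' ∈ closedBall x r,
      u w' - (k y').re + ε / 2 * ‖y' - x‖ ^ 2 - N * ‖w' - f y'‖ ^ 2 ≤
      u w - (k y).re + ε / 2 * ‖y - x‖ ^ 2 - N * ‖w - f y‖ ^ 2 := by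
  let K : Set (Cn n × ℂ) := closedBall (f x) r' ×ˢ closedBall x r
  have hKc : IsCompact K := (isCompact_closedBall _ _).prod (isCompact_closedBall _ _)
  let c : ℕ → Cn n × ℂ → ℝ := fun N q =>
    - u (f x) - (k q.2 - k x).re + ε / 2 * ‖q.2 - x‖ ^ 2 - N * ‖q.1 - f q.2‖ ^ 2
  let G : ℕ → Cn n × ℂ → ℝ := fun N q => u q.1 + c N q
  have hc : ∀ N, ∀ q ∈ K, ContinuousAt (c N) q := by
    intro N q hq
    have h1 : ContinuousAt (fun q : Cn n × ℂ => k q.2) q :=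
      ContinuousAt.comp (g := k) (f := fun q : Cn n × ℂ => q.2)
        (hkd _ hq.2).continuousAt continuousAt_snd
    have h2 : ContinuousAt (fun q : Cn n × ℂ => f q.2) q :=
      ContinuousAt.comp (g := f) (f := fun q : Cn n × ℂ => q.2)
        (hfd _ hq.2).continuousAt continuousAt_snd
    have h3 : ContinuousAt (fun q : Cn n × ℂ => (k q.2 - k x).re) q :=
      Complex.continuous_re.continuousAt.comp (h1.sub continuousAt_const)
    have h4 : ContinuousAt (fun q : Cn n × ℂ => ‖q.2 - x‖ ^ 2) q := by fun_prop
    have h5 : ContinuousAt (fun q : Cn n × ℂ => ‖q.1 - f q.2‖ ^ 2) q :=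
      ((continuousAt_fst.sub h2).norm).pow 2
    exact ((continuousAt_const.sub h3).add (continuousAt_const.mul h4)).sub
      (continuousAt_const.mul h5)
  have hG : ∀ N, ∀ q ∈ K, UpperSemicontinuousAt (G N) q := by
    intro N q hq
    refine UpperSemicontinuousAt.add ?_ (hc N q hq).upperSemicontinuousAt
    intro t ht
    exact continuousAt_fst.eventually (hu.usc q.1 (hball' hq.1) t ht)
  have hGx : ∀ N, G N (f x, x) = 0 := by intro N; simp [G, c]
  have hxK : (f x, x) ∈ K := ⟨mem_closedBall_self hr'.le, mem_closedBall_self hr.le⟩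
  -- far away values are negative
  have hN : ∃ N, ∀ q ∈ K, 0 ≤ G N q → q ∈ ball (f x) r' ×ˢ ball x r := by
    by_contra hcon
    push Not at hcon
    choose q hqK hq0 hqn using hcon
    have hK'c : IsCompact (K \ (ball (f x) r' ×ˢ ball x r)) :=
      hKc.diff (isOpen_ball.prod isOpen_ball)
    obtain ⟨a, ha, ψ, hψ, hlim⟩ := hK'c.tendsto_subseq (x := q) (fun N => ⟨hqK N, hqn N⟩)
    have hge : ∀ m, 0 ≤ G m a := by
      intro m
      by_contra hneg
      push Not at hneg
      have h1 := hlim.eventually (hG m a ha.1 0 hneg)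
      obtain ⟨N, hN1, hN2⟩ := (h1.and (eventually_ge_atTop m)).exists
      have h3 : (m : ℝ) ≤ (ψ N : ℝ) := by exact_mod_cast hN2.trans (hψ.id_le N)
      have h4 := hq0 (ψ N)
      have h5 : G (ψ N) (q (ψ N)) ≤ G m (q (ψ N)) := by
        simp only [G, c]
        have := mul_le_mul_of_nonneg_right h3 (sq_nonneg ‖(q (ψ N)).1 - f (q (ψ N)).2‖)
        linarith
      simp only [Function.comp] at hN1
      linarith
    have hw : a.1 = f a.2 := by
      by_contra hne
      have hpos : 0 < ‖a.1 - f a.2‖ ^ 2 := by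
        have := norm_pos_iff.2 (sub_ne_zero.2 hne)
        positivity
      obtain ⟨m, hm⟩ := exists_nat_gt (G 0 a / ‖a.1 - f a.2‖ ^ 2)
      rw [div_lt_iff₀ hpos] at hm
      have h1 := hge m
      have h2 : G m a = G 0 a - m * ‖a.1 - f a.2‖ ^ 2 := by simp only [G, c]; push_cast; ring
      linarith
    have h1 := hge 0
    have h2 := hH a.2 ha.1.2
    simp only [G, c, hw] at h1
    have h3 : ‖a.2 - x‖ ^ 2 ≤ 0 := by
      simp at h1 h2
      nlinarith
    have h4 : a.2 = x := by
      have : ‖a.2 - x‖ = 0 := by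
        have := norm_nonneg (a.2 - x)
        nlinarith
      exact sub_eq_zero.1 (norm_eq_zero.1 this)
    apply ha.2
    refine ⟨?_, ?_⟩
    · rw [hw, h4]; exact mem_ball_self hr'
    · rw [h4]; exact mem_ball_self hr
  obtain ⟨N, hN⟩ := hN
  obtain ⟨q, hqK, hqmax⟩ := UpperSemicontinuousOn.exists_isMaxOn (f := G N) ⟨_, hxK⟩ hKc
    (fun q hq => (hG N q hq).upperSemicontinuousWithinAt K)
  have hq0 : 0 ≤ G N q := by rw [← hGx N]; exact hqmax hxK
  obtain ⟨hq1, hq2⟩ := hN q hqK hq0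
  refine ⟨N, q.1, hq1, q.2, hq2, fun w' hw' y' hy' => ?_⟩
  have hm : G N (w', y') ≤ G N q := hqmax (⟨hw', hy'⟩ : (w', y') ∈ K)
  simp only [G, c, Complex.sub_re] at hm
  linarith

set_option maxHeartbeats 400000 in
lemma vsh_comp {n : ℕ} {u : Cn n → ℝ} {D : Set (Cn n)} (hD : IsOpen D) (hu : RP u D)
    {f : ℂ → Cn n} {x : ℂ} (hf : ∀ᶠ y in 𝓝 x, DifferentiableAt ℂ f y) (hx : f x ∈ D) :
    VSH (fun y => u (f y)) x := by
  intro k hk ε hε H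
  obtain ⟨r, hr, hball⟩ := Metric.nhds_basis_closedBall.eventually_iff.1 (hf.and (hk.and H))
  obtain ⟨r', hr', hball'⟩ := Metric.nhds_basis_closedBall.mem_iff.1 (hD.mem_nhds hx)
  have hfd : ∀ y ∈ closedBall x r, DifferentiableAt ℂ f y := fun y hy => (hball hy).1
  have hkd : ∀ y ∈ closedBall x r, DifferentiableAt ℂ k y := fun y hy => (hball hy).2.1
  have hH : ∀ y ∈ closedBall x r, u (f y) ≤ u (f x) + (k y - k x).re - ε * ‖y - x‖ ^ 2 :=
    fun y hy => (hball hy).2.2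
  obtain ⟨N, w, hq1, y, hq2, hqmax⟩ := vsh_aux hu hε hr hr' hball' hfd hkd hH
  set b := deriv f y with hbdef
  have hfy : HasDerivAt f b y := (hfd y (ball_subset_closedBall hq2)).hasDerivAt
  set e : ℂ → Cn n := fun t => f (y + t) - f y - t • b with he
  obtain ⟨η, hη, hηN⟩ : ∃ η : ℝ, 0 < η ∧ N * η ^ 2 < ε / 2 := by
    refine ⟨Real.sqrt (ε / (4 * (N + 1))), by positivity, ?_⟩
    rw [Real.sq_sqrt (by positivity)]
    rw [mul_div_assoc', div_lt_div_iff₀ (by positivity) (by positivity)]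
    nlinarith [(Nat.cast_nonneg N : (0:ℝ) ≤ N)]
  have hlo : ∀ᶠ t in 𝓝 (0:ℂ), ‖e t‖ ≤ η * ‖t‖ := by
    have := (hasDerivAt_iff_isLittleO_nhds_zero.1 hfy).def hη
    exact this
  have hev1 : ∀ᶠ t in 𝓝 (0:ℂ), y + t ∈ ball x r := by
    have : ContinuousAt (fun t : ℂ => y + t) 0 := by fun_prop
    exact this.eventually_mem (by simpa using isOpen_ball.mem_nhds hq2)
  have hev2 : ∀ᶠ t in 𝓝 (0:ℂ), w + t • b ∈ ball (f x) r' := by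
    have : ContinuousAt (fun t : ℂ => w + t • b) 0 := by fun_prop
    exact this.eventually_mem (by simpa using isOpen_ball.mem_nhds hq1)
  obtain ⟨s, hs, hsb⟩ := Metric.nhds_basis_closedBall.eventually_iff.1
    (hlo.and (hev1.and hev2))
  have hs' : ∀ t : ℂ, ‖t‖ ≤ s → ‖e t‖ ≤ η * ‖t‖ ∧ y + t ∈ ball x r ∧ w + t • b ∈ ball (f x) r' :=
    fun t ht => hsb (by simpa using ht)
  set d := w - f y with hd
  set h : ℂ → ℂ := fun t => k (y + t) - k y - ε * (starRingEnd ℂ (y - x) * t)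
    - 2 * N * inner ℂ d (e t) with hh
  have hyt : ∀ t : ℂ, DifferentiableAt ℂ (fun t => y + t) t := fun t => by fun_prop
  have hhd : ∀ t : ℂ, ‖t‖ ≤ s → DifferentiableAt ℂ h t := by
    intro t ht
    have h1 := ball_subset_closedBall (hs' t ht).2.1
    have h2 : DifferentiableAt ℂ (fun t => k (y + t)) t := (hkd _ h1).comp t (hyt t)
    have h3 : DifferentiableAt ℂ (fun t => f (y + t)) t := (hfd _ h1).comp t (hyt t)
    have h4 : DifferentiableAt ℂ e t := by
      rw [he]; fun_prop
    have h5 : DifferentiableAt ℂ (fun t => inner ℂ d (e t)) t :=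
      ((innerSL ℂ d).differentiableAt).comp t h4
    rw [hh]
    fun_prop
  have hmain := hu.sub_hol (a := w) (b := b) (hball' (ball_subset_closedBall hq1)) hs
    (fun t ht => hball' (ball_subset_closedBall (hs' t ht).2.2)) h hhd
    (u w - ε / 2 * s ^ 2 + N * η ^ 2 * s ^ 2) (by
      intro t ht
      obtain ⟨h1, h2, h3⟩ := hs' t ht.le
      have hm := hqmax _ (ball_subset_closedBall h3) _ (ball_subset_closedBall h2)
      have e1 : w + t • b - f (y + t) = d - e t := by simp only [hd, he]; abel
      have e2 : ‖d - e t‖ ^ 2 = ‖d‖ ^ 2 - 2 * (inner ℂ d (e t)).re + ‖e t‖ ^ 2 := by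
        have := @norm_sub_sq ℂ _ _ _ _ d (e t)
        simpa using this
      have e3 : ‖y + t - x‖ ^ 2 = ‖y - x‖ ^ 2 + 2 * (starRingEnd ℂ (y - x) * t).re + s ^ 2 := by
        rw [← ht, ← Complex.normSq_eq_norm_sq, ← Complex.normSq_eq_norm_sq,
          ← Complex.normSq_eq_norm_sq]
        simp [Complex.normSq_apply]
        ring
      have e4 : ‖e t‖ ^ 2 ≤ η ^ 2 * s ^ 2 := by
        rw [← ht, ← mul_pow]
        exact pow_le_pow_left₀ (norm_nonneg _) h1 2
      have e5 : (h t).re = (k (y + t) - k y).re - ε * (starRingEnd ℂ (y - x) * t).re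
          - 2 * N * (inner ℂ d (e t)).re := by
        have h6 : ((2 * N : ℂ) * inner ℂ d (e t)).re = 2 * N * (inner ℂ d (e t)).re := by
          have : (2 * N : ℂ) = ((2 * N : ℝ) : ℂ) := by push_cast; ring
          rw [this, Complex.re_ofReal_mul]
        rw [hh]
        simp only [Complex.sub_re, Complex.re_ofReal_mul, h6]
      rw [e1, e2, e3] at hm
      rw [e5]
      have e6 := mul_le_mul_of_nonneg_left e4 (Nat.cast_nonneg N : (0:ℝ) ≤ N)
      simp only [Complex.sub_re] at hm ⊢
      linarith)
  have h0 : h 0 = 0 := by simp [hh, he]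
  rw [h0] at hmain
  have : 0 < s ^ 2 := by positivity
  simp at hmain
  nlinarith

lemma VSH.of_le {S S' : ℂ → ℝ} {x : ℂ} (h : VSH S' x) (hle : ∀ᶠ y in 𝓝 x, S' y ≤ S y)
    (hx : S' x = S x) : VSH S x := by
  intro k hk ε hε H
  refine h k hk ε hε ?_
  filter_upwards [hle, H] with y h1 h2
  rw [hx]; exact h1.trans h2

lemma VSH.affine {S : ℂ → ℝ} {x : ℂ} (hS : VSH S x) {M : ℝ} (hM : 0 < M) {h : ℂ → ℂ}
    (hh : ∀ᶠ y in 𝓝 x, DifferentiableAt ℂ h y) : VSH (fun y => M * S y + (h y).re) x := by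
  intro k hk ε hε H
  refine hS (fun y => ((M⁻¹ : ℝ) : ℂ) * (k y - h y)) ?_ (M⁻¹ * ε) (by positivity) ?_
  · filter_upwards [hh, hk] with y h1 h2
    exact (h2.sub h1).const_mul _
  · filter_upwards [H] with y hy
    have e : (((M⁻¹ : ℝ) : ℂ) * (k y - h y) - ((M⁻¹ : ℝ) : ℂ) * (k x - h x)).re
        = M⁻¹ * ((k y - k x).re - (h y).re + (h x).re) := by
      rw [← mul_sub, Complex.re_ofReal_mul]; simp only [Complex.sub_re]; ring
    rw [e]
    have h2 : S y = M⁻¹ * (M * S y) := by field_simp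
    have h3 : S x = M⁻¹ * (M * S x) := by field_simp
    rw [h2, h3]
    have h4 : M * S y ≤ M * S x + ((k y - k x).re - (h y).re + (h x).re) - ε * ‖y - x‖ ^ 2 := by
      linarith
    have := mul_le_mul_of_nonneg_left h4 (inv_pos.2 hM).le
    linarith

lemma VSH.add_log {n : ℕ} {S : ℂ → ℝ} {x : ℂ} (hS : VSH S x) {M : ℝ} (hM : 0 < M)
    {f : ℂ → Cn n} (hf : ∀ᶠ y in 𝓝 x, DifferentiableAt ℂ f y) (z : Cn n) {τ : ℝ} (hτ : 0 < τ)
    (A : ℝ) : VSH (fun y => Real.log (‖f y - z‖ ^ 2 + τ ^ 2) / 2 + M * S y + A) x := by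
  set P : ℂ → ℝ := fun y => ‖f y - z‖ ^ 2 + τ ^ 2 with hP
  have hPpos : ∀ y, 0 < P y := fun y => by simp only [hP]; positivity
  set g : ℂ → ℂ := fun y => inner ℂ (f x - z) (f y - z) + ((τ ^ 2 : ℝ) : ℂ) with hg
  have hgd : ∀ᶠ y in 𝓝 x, DifferentiableAt ℂ g y := by
    filter_upwards [hf] with y hy
    have h5 : DifferentiableAt ℂ (fun t => inner ℂ (f x - z) (f t - z)) y :=
      ((innerSL ℂ (f x - z)).differentiableAt).comp y (hy.sub_const z)
    exact h5.add_const _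
  have hgx : g x = ((P x : ℝ) : ℂ) := by
    simp only [hg, hP]
    rw [inner_self_eq_norm_sq_to_K]; push_cast; rfl
  have hslit : ∀ᶠ y in 𝓝 x, g y ∈ Complex.slitPlane := by
    refine hgd.self_of_nhds.continuousAt.eventually_mem (Complex.isOpen_slitPlane.mem_nhds ?_)
    rw [hgx]
    exact Complex.ofReal_mem_slitPlane.2 (hPpos x)
  have hCS : ∀ y, ‖g y‖ ^ 2 ≤ P x * P y := by
    intro y
    have h1 : ‖g y‖ ≤ ‖f x - z‖ * ‖f y - z‖ + τ ^ 2 := by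
      refine (norm_add_le _ _).trans ?_
      refine add_le_add (norm_inner_le_norm _ _) ?_
      rw [Complex.norm_real, Real.norm_of_nonneg (by positivity)]
    have h2 := pow_le_pow_left₀ (norm_nonneg _) h1 2
    refine h2.trans ?_
    simp only [hP]
    nlinarith [sq_nonneg (τ * (‖f x - z‖ - ‖f y - z‖))]
  have hb := hS.affine hM (h := fun y => Complex.log (g y) +
    ((A - Real.log (P x) / 2 : ℝ) : ℂ)) (by
      filter_upwards [hgd, hslit] with y h1 h2
      exact (h1.clog h2).add_const _)
  refine hb.of_le ?_ ?_
  · filter_upwards [hslit] with y hy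
    have h0 : 0 < ‖g y‖ := norm_pos_iff.2 (Complex.slitPlane_ne_zero hy)
    have h1 := Real.log_le_log (by positivity) (hCS y)
    rw [Real.log_pow, Real.log_mul (hPpos x).ne' (hPpos y).ne'] at h1
    simp only [Complex.add_re, Complex.log_re, Complex.ofReal_re]
    push_cast at h1
    linarith
  · simp only [Complex.add_re, Complex.log_re, Complex.ofReal_re, hgx, Complex.norm_real,
      Real.norm_of_nonneg (hPpos x).le]
    simp only [hP]
    ring

lemma annulus_bound {S : ℂ → ℝ} {δ ρ a C : ℝ} (hδ : 0 < δ)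
    (husc : ∀ x : ℂ, δ ≤ ‖x‖ → ‖x‖ ≤ ρ → UpperSemicontinuousAt S x)
    (hvsh : ∀ x : ℂ, δ < ‖x‖ → ‖x‖ < ρ → VSH S x)
    (hin : ∀ x : ℂ, ‖x‖ = δ → S x ≤ a * Real.log ‖x‖ + C)
    (hout : ∀ x : ℂ, ‖x‖ = ρ → S x ≤ a * Real.log ‖x‖ + C) (x : ℂ) (hx1 : δ ≤ ‖x‖)
    (hx2 : ‖x‖ ≤ ρ) : S x ≤ a * Real.log ‖x‖ + C := by
  by_contra hcon
  push Not at hcon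
  set γ := S x - (a * Real.log ‖x‖ + C) with hγ
  have hγ0 : 0 < γ := by linarith
  set ε := γ / (2 * (ρ ^ 2 + 1)) with hε
  have hε0 : 0 < ε := by positivity
  have hερ : ε * ρ ^ 2 < γ := by
    rw [hε, div_mul_eq_mul_div, div_lt_iff₀ (by positivity)]
    nlinarith [sq_nonneg ρ]
  set K : Set ℂ := {y | δ ≤ ‖y‖ ∧ ‖y‖ ≤ ρ} with hK
  have hKc : IsCompact K := by
    refine (isCompact_closedBall (0:ℂ) ρ).of_isClosed_subset ?_ ?_
    · exact (isClosed_le continuous_const continuous_norm).inter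
        (isClosed_le continuous_norm continuous_const)
    · intro y hy; simpa using hy.2
  set T : ℂ → ℝ := fun y => S y + (ε * ‖y‖ ^ 2 - a * Real.log ‖y‖) with hT
  have hTu : UpperSemicontinuousOn T K := by
    intro y hy
    have hy0 : ‖y‖ ≠ 0 := (hδ.trans_le hy.1).ne'
    have : ContinuousAt (fun y : ℂ => ε * ‖y‖ ^ 2 - a * Real.log ‖y‖) y := by
      have h1 : ContinuousAt (fun y : ℂ => Real.log ‖y‖) y :=
        continuous_norm.continuousAt.log hy0
      fun_prop
    exact (UpperSemicontinuousAt.add (husc y hy.1 hy.2)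
      this.upperSemicontinuousAt).upperSemicontinuousWithinAt K
  obtain ⟨y, hyK, hymax⟩ := UpperSemicontinuousOn.exists_isMaxOn (⟨x, hx1, hx2⟩ : K.Nonempty) hKc hTu
  have h1 : T x ≤ T y := hymax (⟨hx1, hx2⟩ : x ∈ K)
  have h2 : γ + C ≤ T y := by
    refine le_trans ?_ h1
    simp only [hT]
    have : 0 ≤ ε * ‖x‖ ^ 2 := by positivity
    linarith
  have hbd : S y ≤ a * Real.log ‖y‖ + C → False := by
    intro h
    have h3 : ε * ‖y‖ ^ 2 ≤ ε * ρ ^ 2 := by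
      have := pow_le_pow_left₀ (norm_nonneg y) hyK.2 2
      gcongr
    simp only [hT] at h2
    linarith
  rcases eq_or_lt_of_le hyK.1 with he | hlt
  · exact hbd (hin y he.symm)
  rcases eq_or_lt_of_le hyK.2 with he | hlt2
  · exact hbd (hout y he)
  have hy0 : y ≠ 0 := norm_pos_iff.1 (hδ.trans hlt)
  have hslit : ∀ᶠ t in 𝓝 y, t / y ∈ Complex.slitPlane := by
    have : ContinuousAt (fun t : ℂ => t / y) y := by fun_prop
    refine this.eventually_mem (Complex.isOpen_slitPlane.mem_nhds ?_)
    simp [hy0]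
  refine hvsh y hlt hlt2 (fun t => (a : ℂ) * Complex.log (t / y) -
    ((2 * ε : ℝ) : ℂ) * (starRingEnd ℂ y * t)) ?_ ε hε0 ?_
  · filter_upwards [hslit] with t ht
    have : DifferentiableAt ℂ (fun t : ℂ => t / y) t := by fun_prop
    have := this.clog ht
    fun_prop
  · have hev : ∀ᶠ t in 𝓝 y, t ∈ K := by
      have e1 : ∀ᶠ t : ℂ in 𝓝 y, δ < ‖t‖ := continuous_norm.continuousAt.eventually (lt_mem_nhds hlt)
      have e2 : ∀ᶠ t : ℂ in 𝓝 y, ‖t‖ < ρ := continuous_norm.continuousAt.eventually (gt_mem_nhds hlt2)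
      filter_upwards [e1, e2] with t h1 h2 using ⟨h1.le, h2.le⟩
    filter_upwards [hev] with t ht
    have h3 : T t ≤ T y := hymax ht
    have ht0 : t ≠ 0 := norm_pos_iff.1 (hδ.trans_le ht.1)
    simp only [hT] at h3
    have e3 : ((a : ℂ) * Complex.log (t / y) - ((2 * ε : ℝ) : ℂ) * (starRingEnd ℂ y * t)
        - ((a : ℂ) * Complex.log (y / y) - ((2 * ε : ℝ) : ℂ) * (starRingEnd ℂ y * y))).re
        = a * (Real.log ‖t‖ - Real.log ‖y‖) - 2 * ε * (starRingEnd ℂ y * t).re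
          + 2 * ε * ‖y‖ ^ 2 := by
      have : (starRingEnd ℂ y * y).re = ‖y‖ ^ 2 := by
        rw [← Complex.normSq_eq_norm_sq]; simp [Complex.normSq_apply]
      rw [div_self hy0, Complex.log_one, mul_zero, zero_sub, sub_neg_eq_add, Complex.add_re,
        Complex.sub_re, Complex.re_ofReal_mul, Complex.re_ofReal_mul, Complex.re_ofReal_mul,
        Complex.log_re, norm_div, Real.log_div (norm_ne_zero_iff.2 ht0) (norm_ne_zero_iff.2 hy0),
        this]
    have e4 : ‖t - y‖ ^ 2 = ‖t‖ ^ 2 - 2 * (starRingEnd ℂ y * t).re + ‖y‖ ^ 2 := by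
      rw [← Complex.normSq_eq_norm_sq, ← Complex.normSq_eq_norm_sq, ← Complex.normSq_eq_norm_sq]
      simp [Complex.normSq_apply]
      ring
    rw [e3, e4]
    linarith

lemma VSH.max {S T : ℂ → ℝ} {x : ℂ} (hS : VSH S x) (hT : VSH T x) :
    VSH (fun y => max (S y) (T y)) x := by
  rcases le_total (S x) (T x) with h | h
  · exact hT.of_le (Eventually.of_forall fun y => le_max_right _ _) (max_eq_right h).symm
  · exact hS.of_le (Eventually.of_forall fun y => le_max_left _ _) (max_eq_left h).symm

lemma usc_congr {S T : ℂ → ℝ} {x : ℂ} (hT : UpperSemicontinuousAt T x)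
    (h : ∀ᶠ y in 𝓝 x, S y = T y) : UpperSemicontinuousAt S x := by
  intro t ht
  rw [h.self_of_nhds] at ht
  filter_upwards [h, hT t ht] with y h1 h2
  rw [h1]; exact h2

lemma VSH.congr {S T : ℂ → ℝ} {x : ℂ} (hT : VSH T x) (h : ∀ᶠ y in 𝓝 x, S y = T y) : VSH S x :=
  hT.of_le (h.mono fun _ hy => hy.ge) h.self_of_nhds.symm

/-- Annulus bound for the glued function. -/
lemma step1_glue {n : ℕ} {u : Cn n → ℝ} {D : Set (Cn n)} (hD : IsOpen D) (hu : RP u D)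
    (hneg : ∀ w ∈ D, u w ≤ 0) {p z : Cn n} {R c δ M A τ : ℝ}
    (hδ : 0 < δ) (hδR : δ ≤ R / 2) (hM : 0 < M) (hA0 : A = M * c / 2) (hc0 : 0 < c)
    (hc : ∀ w ∈ D, R / 2 ≤ ‖w - p‖ → u w ≤ -c)
    (hcδ : ∀ w ∈ D, ‖w - p‖ < δ → -c / 4 ≤ u w)
    (hM1 : 0 ≤ Real.log (δ / 4) + M * c / 4) (hM2 : Real.log (2 * R + 1) ≤ M * c / 2)
    (hz : ‖z - p‖ < δ / 4) (hτ : 0 < τ) (hτ1 : τ < 1 / 2) {f : ℂ → Cn n}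
    (hf : DifferentiableOn ℂ f (ball 0 1)) (hfD : MapsTo f (ball 0 1) D)
    (hin : ∀ y : ℂ, ‖y‖ = τ → ‖f y - p‖ < δ ∧
      Real.log (‖f y - z‖ ^ 2 + τ ^ 2) / 2 ≤ 1 / 2 * Real.log τ)
    (ζ : ℂ) (hζ1 : τ ≤ ‖ζ‖) (hζ2 : ‖ζ‖ ≤ 1 / 2) (hζR : R ≤ ‖f ζ - p‖) :
    M * u (f ζ) ≤ 1 / 2 * Real.log ‖ζ‖ + (Real.log (2 * R + 1) + A + 1) := by
  set a : ℂ → ℝ := fun y => M * u (f y) with ha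
  set b : ℂ → ℝ := fun y => Real.log (‖f y - z‖ ^ 2 + τ ^ 2) / 2 + 2 * M * u (f y) + A with hb
  set Ψ : ℂ → ℝ := fun y => if ‖f y - p‖ < δ then b y else
    if ‖f y - p‖ < R then max (a y) (b y) else a y with hΨ
  have hR : 0 < R := by linarith
  have hballev : ∀ y : ℂ, ‖y‖ < 1 → ∀ᶠ t in 𝓝 y, t ∈ ball (0:ℂ) 1 := fun y hy =>
    isOpen_ball.mem_nhds (by simpa using hy)
  have hfd : ∀ y : ℂ, ‖y‖ < 1 → DifferentiableAt ℂ f y := fun y hy =>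
    hf.differentiableAt (hballev y hy)
  have hfd' : ∀ y : ℂ, ‖y‖ < 1 → ∀ᶠ t in 𝓝 y, DifferentiableAt ℂ f t := fun y hy => by
    filter_upwards [hballev y hy] with t ht
    exact hfd t (by simpa using ht)
  have hD' : ∀ y : ℂ, ‖y‖ < 1 → f y ∈ D := fun y hy => hfD (by simpa using hy)
  -- upper bound of the logarithm
  have hlogup : ∀ y : ℂ, ‖f y - p‖ < R →
      Real.log (‖f y - z‖ ^ 2 + τ ^ 2) / 2 ≤ Real.log (2 * R + 1) := by
    intro y hy
    have h1 : ‖f y - z‖ ≤ 2 * R := by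
      have : f y - z = (f y - p) - (z - p) := by abel
      rw [this]
      refine (norm_sub_le _ _).trans ?_
      linarith
    have h2 : ‖f y - z‖ ^ 2 + τ ^ 2 ≤ (2 * R + 1) ^ 2 := by
      have := pow_le_pow_left₀ (norm_nonneg _) h1 2
      nlinarith
    have h3 := Real.log_le_log (by positivity) h2
    rw [Real.log_pow] at h3
    push_cast at h3
    linarith
  have hz1 : ∀ y : ℂ, ‖y‖ < 1 → δ / 2 < ‖f y - p‖ → ‖f y - p‖ < δ → a y ≤ b y := by
    intro y hy h1 h2
    have h3 := hcδ _ (hD' y hy) h2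
    have h4 : δ / 4 ≤ ‖f y - z‖ := by
      have : f y - p = (f y - z) + (z - p) := by abel
      have h5 := norm_add_le (f y - z) (z - p)
      rw [← this] at h5
      linarith
    have h5 : (δ / 4) ^ 2 ≤ ‖f y - z‖ ^ 2 + τ ^ 2 := by
      have := pow_le_pow_left₀ (by positivity) h4 2
      nlinarith
    have h6 := Real.log_le_log (by positivity) h5
    rw [Real.log_pow] at h6
    push_cast at h6
    have h7 := mul_le_mul_of_nonneg_left h3 hM.le
    simp only [ha, hb]
    linarith
  have hz2 : ∀ y : ℂ, ‖y‖ < 1 → R / 2 < ‖f y - p‖ → ‖f y - p‖ < R → b y ≤ a y := by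
    intro y hy h1 h2
    have h3 := hc _ (hD' y hy) h1.le
    have h4 := hlogup y h2
    have h7 := mul_le_mul_of_nonneg_left h3 hM.le
    simp only [ha, hb]
    linarith
  -- semicontinuity and subharmonicity of the pieces
  have hcont : ∀ y : ℂ, ‖y‖ < 1 → ContinuousAt (fun t => ‖f t - p‖) y := fun y hy =>
    ((hfd y hy).continuousAt.sub continuousAt_const).norm
  have huf : ∀ y : ℂ, ‖y‖ < 1 → UpperSemicontinuousAt (fun t => u (f t)) y := by
    intro y hy t ht
    exact (hfd y hy).continuousAt.eventually (hu.usc _ (hD' y hy) t ht)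
  have hmulusc : ∀ (m : ℝ), 0 < m → ∀ y : ℂ, ‖y‖ < 1 →
      UpperSemicontinuousAt (fun t => m * u (f t)) y := by
    intro m hm y hy t ht
    have h1 : u (f y) < t / m := by rw [lt_div_iff₀ hm]; linarith
    filter_upwards [huf y hy _ h1] with s hs
    rw [lt_div_iff₀ hm] at hs
    linarith
  have ha_usc : ∀ y : ℂ, ‖y‖ < 1 → UpperSemicontinuousAt a y := hmulusc M hM
  have hb_usc : ∀ y : ℂ, ‖y‖ < 1 → UpperSemicontinuousAt b y := by
    intro y hy
    have h1 : ContinuousAt (fun t => Real.log (‖f t - z‖ ^ 2 + τ ^ 2) / 2) y := by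
      have h2 : ContinuousAt (fun t => ‖f t - z‖ ^ 2 + τ ^ 2) y :=
        (((hfd y hy).continuousAt.sub continuousAt_const).norm.pow 2).add continuousAt_const
      exact (h2.log (by positivity)).div_const 2
    exact (h1.upperSemicontinuousAt.add (hmulusc (2 * M) (by positivity) y hy)).add
      continuousAt_const.upperSemicontinuousAt
  have hva : ∀ y : ℂ, ‖y‖ < 1 → VSH a y := by
    intro y hy
    have := (vsh_comp hD hu (hfd' y hy) (hD' y hy)).affine hM (h := fun _ => 0)
      (Eventually.of_forall fun t => differentiableAt_const _)
    simpa using this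
  have hvb : ∀ y : ℂ, ‖y‖ < 1 → VSH b y := by
    intro y hy
    exact (vsh_comp hD hu (hfd' y hy) (hD' y hy)).add_log (by positivity : 0 < 2 * M)
      (hfd' y hy) z hτ A
  have hloc : ∀ y : ℂ, ‖y‖ < 1 → UpperSemicontinuousAt Ψ y ∧ VSH Ψ y := by
    intro y hy
    rcases lt_or_ge ‖f y - p‖ δ with h1 | h1
    · have he : ∀ᶠ t in 𝓝 y, Ψ t = b t := by
        filter_upwards [(hcont y hy).eventually (gt_mem_nhds h1)] with t ht
        simp only [hΨ, if_pos ht]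
      exact ⟨usc_congr (hb_usc y hy) he, (hvb y hy).congr he⟩
    rcases lt_or_ge ‖f y - p‖ R with h2 | h2
    · have he : ∀ᶠ t in 𝓝 y, Ψ t = max (a t) (b t) := by
        filter_upwards [(hcont y hy).eventually (gt_mem_nhds h2),
          (hcont y hy).eventually (lt_mem_nhds (by linarith : δ / 2 < ‖f y - p‖)),
          hballev y hy] with t ht1 ht2 ht3
        by_cases h3 : ‖f t - p‖ < δ
        · simp only [hΨ, if_pos h3]
          rw [max_eq_right (hz1 t (by simpa using ht3) ht2 h3)]
        · simp only [hΨ, if_neg h3, if_pos ht1]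
      refine ⟨usc_congr ?_ he, ((hva y hy).max (hvb y hy)).congr he⟩
      intro t ht
      have h3 := max_lt_iff.1 ht
      filter_upwards [ha_usc y hy t h3.1, hb_usc y hy t h3.2] with s hs1 hs2
      exact max_lt hs1 hs2
    · have he : ∀ᶠ t in 𝓝 y, Ψ t = a t := by
        filter_upwards [(hcont y hy).eventually (lt_mem_nhds (by linarith : R / 2 < ‖f y - p‖)),
          hballev y hy] with t ht2 ht3
        have h3 : ¬ ‖f t - p‖ < δ := by linarith
        by_cases h4 : ‖f t - p‖ < R
        · simp only [hΨ, if_neg h3, if_pos h4]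
          rw [max_eq_left (hz2 t (by simpa using ht3) ht2 h4)]
        · simp only [hΨ, if_neg h3, if_neg h4]
      exact ⟨usc_congr (ha_usc y hy) he, (hva y hy).congr he⟩
  have hAnn : 0 ≤ A := by rw [hA0]; positivity
  have hlogR : 0 ≤ Real.log (2 * R + 1) := Real.log_nonneg (by linarith)
  have hbup : ∀ y : ℂ, ‖y‖ < 1 → ‖f y - p‖ < R → b y ≤ Real.log (2 * R + 1) + A := by
    intro y hy h1
    have h2 := hlogup y h1
    have h3 := hneg _ (hD' y hy)
    have h4 : M * u (f y) ≤ 0 := mul_nonpos_of_nonneg_of_nonpos hM.le h3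
    simp only [hb]
    linarith
  have haup : ∀ y : ℂ, ‖y‖ < 1 → a y ≤ Real.log (2 * R + 1) + A := by
    intro y hy
    have h4 : M * u (f y) ≤ 0 := mul_nonpos_of_nonneg_of_nonpos hM.le (hneg _ (hD' y hy))
    simp only [ha]
    linarith
  have hΨup : ∀ y : ℂ, ‖y‖ < 1 → Ψ y ≤ Real.log (2 * R + 1) + A := by
    intro y hy
    simp only [hΨ]
    split_ifs with h1 h2
    · exact hbup y hy (by linarith)
    · exact max_le (haup y hy) (hbup y hy h2)
    · exact haup y hy
  have hfin := annulus_bound (S := Ψ) (δ := τ) (ρ := 1 / 2) (a := 1 / 2)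
    (C := Real.log (2 * R + 1) + A + 1) hτ
    (fun y _ h2 => (hloc y (by linarith)).1) (fun y _ h2 => (hloc y (by linarith)).2)
    (by
      intro y hy
      obtain ⟨h1, h2⟩ := hin y hy
      have hy1 : ‖y‖ < 1 := by linarith
      have h4 : M * u (f y) ≤ 0 := mul_nonpos_of_nonneg_of_nonpos hM.le (hneg _ (hD' y hy1))
      simp only [hΨ, if_pos h1, hb, hy]
      linarith)
    (by
      intro y hy
      have hy1 : ‖y‖ < 1 := by linarith
      have h1 := hΨup y hy1
      rw [hy]
      have h2 : Real.log (1 / 2 : ℝ) = - Real.log 2 := by rw [one_div, Real.log_inv]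
      have h3 : Real.log 2 ≤ 1 := by
        have := Real.log_two_lt_d9; linarith
      rw [h2]
      linarith) ζ hζ1 hζ2
  have h3 : ¬ ‖f ζ - p‖ < δ := by linarith
  have h4 : ¬ ‖f ζ - p‖ < R := by linarith
  simp only [hΨ, if_neg h3, if_neg h4] at hfin
  exact hfin

lemma step1 {n : ℕ} {u : Cn n → ℝ} {D : Set (Cn n)} (hD : IsOpen D) (hu : RP u D)
    (hneg : ∀ w ∈ D, u w ≤ 0) (hlow : ∀ w ∈ D, -1 ≤ u w) {p : Cn n} {R c δ : ℝ}
    (hδ : 0 < δ) (hδR : δ ≤ R / 2) (hc0 : 0 < c)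
    (hc : ∀ w ∈ D, R / 2 ≤ ‖w - p‖ → u w ≤ -c)
    (hcδ : ∀ w ∈ D, ‖w - p‖ < δ → -c / 4 ≤ u w) :
    ∃ κ : ℝ, 0 < κ ∧ κ < 1 ∧ ∀ f : ℂ → Cn n, DifferentiableOn ℂ f (ball 0 1) →
      MapsTo f (ball 0 1) D → ‖f 0 - p‖ < δ / 4 → ∀ ζ : ℂ, ‖ζ‖ < κ → ‖f ζ - p‖ < R := by
  set M : ℝ := |4 * Real.log (δ / 4) / c| + |2 * Real.log (2 * R + 1) / c| + 1 with hMdef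
  have hM : 0 < M := by positivity
  set A := M * c / 2 with hA
  have hAnn : 0 ≤ A := by positivity
  have hlogR : 0 ≤ Real.log (2 * R + 1) := Real.log_nonneg (by linarith)
  have hM1 : 0 ≤ Real.log (δ / 4) + M * c / 4 := by
    have h1 : - (4 * Real.log (δ / 4) / c) ≤ M := by
      have := neg_le_abs (4 * Real.log (δ / 4) / c)
      have := abs_nonneg (2 * Real.log (2 * R + 1) / c)
      linarith
    have h2 := mul_le_mul_of_nonneg_right h1 hc0.le
    have h3 : - (4 * Real.log (δ / 4) / c) * c = - (4 * Real.log (δ / 4)) := by field_simp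
    linarith
  have hM2 : Real.log (2 * R + 1) ≤ M * c / 2 := by
    have h1 : 2 * Real.log (2 * R + 1) / c ≤ M := by
      have := le_abs_self (2 * Real.log (2 * R + 1) / c)
      have := abs_nonneg (4 * Real.log (δ / 4) / c)
      linarith
    rw [div_le_iff₀ hc0] at h1
    linarith
  set E := M + (Real.log (2 * R + 1) + A + 1) + 1 with hE
  have hE1 : 1 ≤ E := by linarith
  have hhalf : Real.exp (-(2 * E)) < 1 / 2 := by
    have h1 := Real.add_one_le_exp (2 * E)
    rw [Real.exp_neg, inv_lt_comm₀ (Real.exp_pos _) (by norm_num)]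
    norm_num
    linarith
  refine ⟨Real.exp (-(2 * E)), Real.exp_pos _, by linarith, ?_⟩
  intro f hf hfD hz ζ hζ
  by_contra hcon
  push Not at hcon
  have hζ0 : ζ ≠ 0 := by
    rintro rfl
    linarith
  have hζpos : 0 < ‖ζ‖ := norm_pos_iff.2 hζ0
  have hfd0 : DifferentiableAt ℂ f 0 := hf.differentiableAt (ball_mem_nhds _ one_pos)
  have hO := hfd0.hasDerivAt.hasFDerivAt.isBigO_sub
  obtain ⟨B, hB0, hB⟩ := hO.exists_pos
  have hev : ∀ᶠ y in 𝓝 (0:ℂ), ‖f y - f 0‖ ≤ B * ‖y‖ ∧ ‖f y - p‖ < δ := by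
    have h1 := hB.bound
    have h2 : ContinuousAt (fun t => ‖f t - p‖) 0 :=
      (hfd0.continuousAt.sub continuousAt_const).norm
    filter_upwards [h1, h2.eventually (gt_mem_nhds (by linarith : ‖f 0 - p‖ < δ))] with y hy1 hy2
    exact ⟨by simpa using hy1, hy2⟩
  obtain ⟨s, hs, hsb⟩ := Metric.nhds_basis_closedBall.eventually_iff.1 hev
  set τ := min (min s ‖ζ‖) (1 / (B + 1) ^ 2) with hτdef
  have hτ : 0 < τ := by positivity
  have hτs : τ ≤ s := (min_le_left _ _).trans (min_le_left _ _)
  have hτζ : τ ≤ ‖ζ‖ := (min_le_left _ _).trans (min_le_right _ _)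
  have hτB : (B + 1) ^ 2 * τ ≤ 1 := by
    have : τ ≤ 1 / (B + 1) ^ 2 := min_le_right _ _
    rw [le_div_iff₀ (by positivity)] at this
    linarith
  have hfin := step1_glue hD hu hneg hδ hδR hM hA hc0 hc hcδ hM1 hM2 hz hτ
    (by linarith) hf hfD (by
      intro y hy
      obtain ⟨h1, h2⟩ := hsb (by simpa [hy] using hτs : y ∈ closedBall (0:ℂ) s)
      refine ⟨h2, ?_⟩
      have h3 : ‖f y - f 0‖ ^ 2 + τ ^ 2 ≤ τ := by
        rw [hy] at h1
        have := pow_le_pow_left₀ (norm_nonneg _) h1 2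
        have h5 : (B * τ) ^ 2 + τ ^ 2 ≤ ((B + 1) ^ 2 * τ) * τ := by
          have : 0 ≤ B * τ ^ 2 := by positivity
          nlinarith
        have h6 := mul_le_mul_of_nonneg_right hτB hτ.le
        linarith
      have := Real.log_le_log (by positivity) h3
      linarith) ζ hτζ (by linarith) hcon
  have h1 := hlow _ (hfD (by simpa using (by linarith : ‖ζ‖ < 1)))
  have h2 : Real.log ‖ζ‖ < -(2 * E) := by
    rw [Real.log_lt_iff_lt_exp hζpos]; exact hζ
  have h3 := mul_le_mul_of_nonneg_left h1 hM.le
  linarith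

/-- The involutive disc automorphism exchanging `0` and `l`. -/
def mob (l ζ : ℂ) : ℂ := (l - ζ) / (1 - starRingEnd ℂ l * ζ)

lemma mob_den {l ζ : ℂ} (hl : ‖l‖ < 1) (hζ : ‖ζ‖ < 1) : 1 - starRingEnd ℂ l * ζ ≠ 0 := by
  intro h
  have h1 : starRingEnd ℂ l * ζ = 1 := (sub_eq_zero.1 h).symm
  have h2 : ‖l‖ * ‖ζ‖ = 1 := by
    have := congrArg norm h1
    simpa using this
  nlinarith [norm_nonneg l, norm_nonneg ζ]

lemma mob_lt {l ζ : ℂ} (hl : ‖l‖ < 1) (hζ : ‖ζ‖ < 1) : ‖mob l ζ‖ < 1 := by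
  have hd : 0 < ‖1 - starRingEnd ℂ l * ζ‖ := norm_pos_iff.2 (mob_den hl hζ)
  rw [mob, norm_div, div_lt_one hd]
  refine lt_of_pow_lt_pow_left₀ 2 hd.le ?_
  have key : ‖1 - starRingEnd ℂ l * ζ‖ ^ 2 - ‖l - ζ‖ ^ 2 = (1 - ‖l‖ ^ 2) * (1 - ‖ζ‖ ^ 2) := by
    simp only [← Complex.normSq_eq_norm_sq, Complex.normSq_apply]
    simp
    ring
  have h1 : 0 < 1 - ‖l‖ ^ 2 := by nlinarith [norm_nonneg l]
  have h2 : 0 < 1 - ‖ζ‖ ^ 2 := by nlinarith [norm_nonneg ζ]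
  have := mul_pos h1 h2
  linarith

lemma mob_comp {n : ℕ} {D : Set (Cn n)} {l : ℂ} (hl : ‖l‖ < 1) {f : ℂ → Cn n}
    (hf : DifferentiableOn ℂ f (ball 0 1)) (hfD : MapsTo f (ball 0 1) D) :
    DifferentiableOn ℂ (fun ζ => f (mob l ζ)) (ball 0 1) ∧
      MapsTo (fun ζ => f (mob l ζ)) (ball 0 1) D := by
  have hm : MapsTo (mob l) (ball 0 1) (ball 0 1) := by
    intro ζ hζ
    simp only [mem_ball_zero_iff] at hζ ⊢
    exact mob_lt hl hζ
  refine ⟨hf.comp (t := ball 0 1) ?_ hm, hfD.comp hm⟩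
  intro ζ hζ
  have hζ' : ‖ζ‖ < 1 := by simpa using hζ
  have h1 : DifferentiableAt ℂ (fun ζ : ℂ => l - ζ) ζ := by fun_prop
  have h2 : DifferentiableAt ℂ (fun ζ : ℂ => 1 - starRingEnd ℂ l * ζ) ζ := by fun_prop
  exact (h1.div h2 (mob_den hl hζ')).differentiableWithinAt

lemma step2 {n : ℕ} {u : Cn n → ℝ} {D U V : Set (Cn n)} (hD : IsOpen D) (hu : RP u D)
    (hneg : ∀ w ∈ D, u w ≤ 0) {κ c : ℝ} (hκ : 0 < κ) (hκ1 : κ < 1) (hc0 : 0 < c)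
    (hstep : ∀ f : ℂ → Cn n, DifferentiableOn ℂ f (ball 0 1) →
      MapsTo f (ball 0 1) D → f 0 ∈ V → ∀ ζ : ℂ, ‖ζ‖ < κ → f ζ ∈ U)
    (hc : ∀ w ∈ D, w ∉ V → u w ≤ -c) {f : ℂ → Cn n}
    (hf : DifferentiableOn ℂ f (ball 0 1)) (hfD : MapsTo f (ball 0 1) D) (hfV : f 0 ∈ V)
    (l : ℂ) (hl1 : ‖l‖ < 1) (hl : ‖l‖ < Real.exp (Real.log (2 / κ) / c * u (f 0))) :
    f l ∈ U := by
  by_contra hlU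
  obtain ⟨hF, hFD⟩ := mob_comp hl1 hf hfD
  set F : ℂ → Cn n := fun ζ => f (mob l ζ) with hFdef
  have hF0 : F 0 = f l := by simp [hFdef, mob]
  have hFl : F l = f 0 := by simp [hFdef, mob]
  have hFV : ∀ μ : ℂ, ‖μ‖ < κ → F μ ∉ V := by
    intro μ hμ hV
    have hμ1 : ‖μ‖ < 1 := hμ.trans hκ1
    obtain ⟨hH, hHD⟩ := mob_comp hμ1 hF hFD
    have := hstep _ hH hHD (by simpa [mob] using hV) μ hμ
    simp only [mob, sub_self, zero_div] at this
    rw [hF0] at this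
    exact hlU this
  have hlκ : κ ≤ ‖l‖ := by
    by_contra h
    push Not at h
    exact hFV l h (by rw [hFl]; exact hfV)
  have hlpos : 0 < ‖l‖ := hκ.trans_le hlκ
  set L := Real.log (2 / κ) with hL
  have hL0 : 0 < L := Real.log_pos (by rw [lt_div_iff₀ hκ]; linarith)
  set a := c / L with ha
  have ha0 : 0 < a := by positivity
  have hballev : ∀ y : ℂ, ‖y‖ < 1 → ∀ᶠ t in 𝓝 y, t ∈ ball (0:ℂ) 1 := fun y hy =>
    isOpen_ball.mem_nhds (by simpa using hy)
  have hFd : ∀ y : ℂ, ‖y‖ < 1 → DifferentiableAt ℂ F y := fun y hy =>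
    hF.differentiableAt (hballev y hy)
  have hFd' : ∀ y : ℂ, ‖y‖ < 1 → ∀ᶠ t in 𝓝 y, DifferentiableAt ℂ F t := fun y hy => by
    filter_upwards [hballev y hy] with t ht
    exact hFd t (by simpa using ht)
  have hD' : ∀ y : ℂ, ‖y‖ < 1 → F y ∈ D := fun y hy => hFD (by simpa using hy)
  have hlogκ : a * Real.log (κ / 2) = -c := by
    have : Real.log (κ / 2) = - L := by rw [hL, ← Real.log_inv, inv_div]
    rw [this, ha]; field_simp
  have hbound : ∀ ρ : ℝ, ‖l‖ < ρ → ρ < 1 → u (f 0) ≤ a * Real.log ‖l‖ + - (a * Real.log ρ) := by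
    intro ρ hρ1 hρ2
    have hρlog : a * Real.log ρ ≤ 0 :=
      mul_nonpos_of_nonneg_of_nonpos ha0.le (Real.log_nonpos (by linarith) hρ2.le)
    have := annulus_bound (S := fun y => u (F y)) (δ := κ / 2) (ρ := ρ) (a := a)
      (C := - (a * Real.log ρ)) (by positivity)
      (fun y _ h2 t ht => (hFd y (by linarith)).continuousAt.eventually
        (hu.usc _ (hD' y (by linarith)) t ht))
      (fun y _ h2 => vsh_comp hD hu (hFd' y (by linarith)) (hD' y (by linarith)))
      (by
        intro y hy
        have h1 := hc _ (hD' y (by linarith)) (hFV y (by linarith))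
        rw [hy, hlogκ]
        linarith)
      (by
        intro y hy
        have h1 := hneg _ (hD' y (by linarith))
        rw [hy]
        linarith) l (by linarith) hρ1.le
    simpa [hFl] using this
  have hlim : u (f 0) ≤ a * Real.log ‖l‖ := by
    have ht : Tendsto (fun ρ : ℝ => a * Real.log ‖l‖ + - (a * Real.log ρ)) (𝓝[<] 1)
        (𝓝 (a * Real.log ‖l‖ + - (a * Real.log 1))) := by
      have : ContinuousAt (fun ρ : ℝ => a * Real.log ‖l‖ + - (a * Real.log ρ)) 1 := by
        have := Real.continuousAt_log (one_ne_zero)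
        fun_prop
      exact this.tendsto.mono_left nhdsWithin_le_nhds
    have := ge_of_tendsto ht (b := u (f 0)) (by
      filter_upwards [Ioo_mem_nhdsLT hl1] with ρ hρ
      exact hbound ρ hρ.1 hρ.2)
    simpa using this
  rw [← Real.log_lt_iff_lt_exp hlpos] at hl
  have h1 : L / c * u (f 0) ≤ L / c * (a * Real.log ‖l‖) :=
    mul_le_mul_of_nonneg_left hlim (by positivity)
  have h2 : L / c * (a * Real.log ‖l‖) = Real.log ‖l‖ := by rw [ha]; field_simp
  linarith

/-- Scaling step for the Kobayashi metric. -/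
lemma kob_scale {n : ℕ} {D U : Set (Cn n)} {z X : Cn n} {r : ℝ} (hr : 0 < r) (hr1 : r ≤ 1)
    (h : ∀ f : ℂ → Cn n, DifferentiableOn ℂ f (ball 0 1) → MapsTo f (ball 0 1) D → f 0 = z →
      ∀ l : ℂ, ‖l‖ < r → f l ∈ U) :
    r * kobayashi (D ∩ U) z X ≤ kobayashi D z X := by
  set SU : Set ℝ := {c : ℝ | ∃ α : ℂ, c = ‖α‖ ∧ ∃ f : ℂ → Cn n,
    DifferentiableOn ℂ f (ball (0:ℂ) 1) ∧ MapsTo f (ball (0:ℂ) 1) (D ∩ U) ∧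
    f 0 = z ∧ α • deriv f 0 = X} with hSU
  set SD : Set ℝ := {c : ℝ | ∃ α : ℂ, c = ‖α‖ ∧ ∃ f : ℂ → Cn n,
    DifferentiableOn ℂ f (ball (0:ℂ) 1) ∧ MapsTo f (ball (0:ℂ) 1) D ∧
    f 0 = z ∧ α • deriv f 0 = X} with hSD
  change r * sInf SU ≤ sInf SD
  have hbdd : BddBelow SU := ⟨0, by rintro c ⟨α, rfl, _⟩; exact norm_nonneg _⟩
  rcases SD.eq_empty_or_nonempty with he | hne
  · have : SU = ∅ := by
      rw [eq_empty_iff_forall_notMem]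
      rintro c ⟨α, hc, f, h1, h2, h3, h4⟩
      have : c ∈ SD := ⟨α, hc, f, h1, fun x hx => (h2 hx).1, h3, h4⟩
      rw [he] at this
      exact this
    rw [he, this]; simp
  · refine le_csInf hne ?_
    rintro c ⟨α, rfl, f, h1, h2, h3, h4⟩
    have hmem : ‖α‖ / r ∈ SU := by
      refine ⟨α / r, by simp [abs_of_pos hr], fun ζ => f (r * ζ), ?_, ?_, by simpa using h3, ?_⟩
      · refine h1.comp (t := ball 0 1) (by fun_prop) ?_
        intro ζ hζ
        simp only [mem_ball_zero_iff, norm_mul, Complex.norm_real, Real.norm_of_nonneg hr.le] at hζ ⊢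
        nlinarith [norm_nonneg ζ]
      · intro ζ hζ
        have hζ' : ‖ζ‖ < 1 := by simpa using hζ
        have hn : ‖(r : ℂ) * ζ‖ < r := by
          rw [norm_mul, Complex.norm_real, Real.norm_of_nonneg hr.le]
          nlinarith
        exact ⟨h2 (by simpa using hn.trans_le hr1), h f h1 h2 h3 _ hn⟩
      · have hd : deriv (fun ζ : ℂ => f ((r : ℂ) * ζ)) 0 = (r : ℂ) • deriv f 0 := by
          have := deriv_comp_mul_left (r : ℂ) f 0
          simpa using this
        rw [hd, smul_smul, div_mul_cancel₀ _ (by exact_mod_cast hr.ne')]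
        exact h4
    have := csInf_le hbdd hmem
    rw [le_div_iff₀ hr] at this
    linarith

lemma kob_nonneg {n : ℕ} (D : Set (Cn n)) (z X : Cn n) : 0 ≤ kobayashi D z X := by
  apply Real.sInf_nonneg
  rintro c ⟨α, rfl, _⟩
  exact norm_nonneg _

lemma coe_max_toReal {x : EReal} (hx : x < ⊤) : (((max x (-1 : ℝ)).toReal : ℝ) : EReal)
    = max x ((-1 : ℝ) : EReal) := by
  apply EReal.coe_toReal
  · exact (max_lt hx (EReal.coe_lt_top _)).ne
  · exact (lt_of_lt_of_le (EReal.bot_lt_coe (-1)) (le_max_right _ _)).ne'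

/-- Truncating a psh function from below gives a real-valued one. -/
lemma rp_trunc {n : ℕ} {D : Set (Cn n)} (hD : IsOpen D) {φ : Cn n → EReal} (hφ : PSHOn φ D)
    (htop : ∀ w ∈ D, φ w < ⊤) : RP (fun w => (max (φ w) ((-1 : ℝ) : EReal)).toReal) D := by
  have hco : ∀ w ∈ D, (((max (φ w) ((-1 : ℝ) : EReal)).toReal : ℝ) : EReal)
      = max (φ w) ((-1 : ℝ) : EReal) := fun w hw => coe_max_toReal (htop w hw)
  constructor
  · intro a ha t ht
    have h1 : max (φ a) ((-1 : ℝ) : EReal) < (t : EReal) := by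
      rw [← hco a ha]; exact_mod_cast ht
    have h2 := hφ.1 a ha (t : EReal) (max_lt_iff.1 h1).1
    rw [hD.nhdsWithin_eq ha] at h2
    filter_upwards [h2, hD.mem_nhds ha] with w hw hwD
    have h3 : max (φ w) ((-1 : ℝ) : EReal) < (t : EReal) := max_lt hw (max_lt_iff.1 h1).2
    rw [← hco w hwD] at h3
    exact_mod_cast h3
  · intro a ha b r hr hd g hg hle
    have hmem : ∀ θ : ℝ, a + ((r : ℂ) * Complex.exp (θ * Complex.I)) • b ∈ D := by
      intro θ
      apply hd
      rw [norm_mul, Complex.norm_exp_ofReal_mul_I]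
      simp [abs_of_pos hr]
    have hle' : ∀ θ : ℝ, max (φ (a + ((r : ℂ) * Complex.exp (θ * Complex.I)) • b))
        ((-1 : ℝ) : EReal) ≤ (g θ : EReal) := by
      intro θ
      rw [← hco _ (hmem θ)]
      exact_mod_cast hle θ
    have h1 := hφ.2 a ha b r hr hd g hg (fun θ => (le_max_left _ _).trans (hle' θ))
    have h2 : (-1 : ℝ) ≤ (1 / (2 * Real.pi)) * ∫ θ in (0:ℝ)..(2 * Real.pi), g θ := by
      have hg1 : ∀ θ, (-1 : ℝ) ≤ g θ := fun θ => by
        exact_mod_cast (le_max_right _ _).trans (hle' θ)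
      have h3 : ∫ θ in (0:ℝ)..(2 * Real.pi), (-1 : ℝ) ≤ ∫ θ in (0:ℝ)..(2 * Real.pi), g θ :=
        intervalIntegral.integral_mono (by positivity) (by simp)
          (hg.intervalIntegrable _ _) hg1
      simp only [intervalIntegral.integral_const, smul_eq_mul, sub_zero] at h3
      have h4 := mul_le_mul_of_nonneg_left h3 (by positivity : 0 ≤ 1 / (2 * Real.pi))
      refine le_trans (le_of_eq ?_) h4
      field_simp
    have h5 := max_le h1 (EReal.coe_le_coe_iff.2 h2)
    rw [← hco a ha] at h5
    exact_mod_cast h5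

/-- Quantitative localization of the Kobayashi metric near a psh peak
boundary point. -/
theorem kobayashi_localization_peak {n : ℕ} (D : Set (Cn n)) (hD : IsOpen D)
    (hDconn : IsConnected D) (p : Cn n) (hp : p ∈ frontier D)
    (φ : Cn n → EReal) (hφ : IsPshPeakFn D p φ)
    (U : Set (Cn n)) (hU : IsOpen U) (hUb : Bornology.IsBounded U) (hpU : p ∈ U) :
    ∃ V : Set (Cn n), IsOpen V ∧ p ∈ V ∧ V ⊆ U ∧ ∃ m : ℝ, 0 < m ∧
      ∀ z ∈ D ∩ V, ∀ X : Cn n,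
        kobayashi D z X ≥ erexp ((m : EReal) * φ z) * kobayashi (D ∩ U) z X := by
  obtain ⟨hpsh, hlim, hpeak⟩ := hφ
  have hpD : p ∉ D := by
    rw [hD.frontier_eq] at hp; exact hp.2
  have hneg' : ∀ w ∈ D, φ w < 0 := by
    intro w hw
    have hne : p ≠ w := fun h => hpD (h ▸ hw)
    obtain ⟨c, hc, hcw⟩ := hpeak {w}ᶜ (isOpen_compl_singleton.mem_nhds hne)
    exact (hcw w ⟨hw, by simp⟩).trans_lt (by exact_mod_cast hc)
  have htop : ∀ w ∈ D, φ w < ⊤ := fun w hw => (hneg' w hw).trans EReal.zero_lt_top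
  have hRP := rp_trunc hD hpsh htop
  set u : Cn n → ℝ := fun w => (max (φ w) ((-1 : ℝ) : EReal)).toReal with hu
  have hco : ∀ w ∈ D, ((u w : ℝ) : EReal) = max (φ w) ((-1 : ℝ) : EReal) :=
    fun w hw => coe_max_toReal (htop w hw)
  have hneg : ∀ w ∈ D, u w ≤ 0 := by
    intro w hw
    have : ((u w : ℝ) : EReal) ≤ ((0 : ℝ) : EReal) := by
      rw [hco w hw]
      exact max_le (hneg' w hw).le (by exact_mod_cast (by norm_num : (-1 : ℝ) ≤ 0))
    exact_mod_cast this
  have hlow : ∀ w ∈ D, -1 ≤ u w := by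
    intro w hw
    have : ((-1 : ℝ) : EReal) ≤ ((u w : ℝ) : EReal) := by
      rw [hco w hw]; exact le_max_right _ _
    exact_mod_cast this
  have hpk : ∀ W ∈ 𝓝 p, ∃ c : ℝ, 0 < c ∧ ∀ w ∈ D, w ∉ W → u w ≤ -c := by
    intro W hW
    obtain ⟨c, hc, hcw⟩ := hpeak W hW
    refine ⟨min (-c) 1, by simp [hc], fun w hw hwW => ?_⟩
    have : ((u w : ℝ) : EReal) ≤ ((-(min (-c) 1) : ℝ) : EReal) := by
      rw [hco w hw]
      refine max_le ((hcw w ⟨hw, hwW⟩).trans ?_) ?_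
      · have := min_le_left (-c) 1
        exact_mod_cast (by linarith : c ≤ -(min (-c) 1))
      · have := min_le_right (-c) 1
        exact_mod_cast (by linarith : (-1 : ℝ) ≤ -(min (-c) 1))
    exact_mod_cast this
  obtain ⟨R, hR, hRU⟩ := Metric.isOpen_iff.1 hU p hpU
  obtain ⟨c, hc0, hc⟩ := hpk (ball p (R / 2)) (ball_mem_nhds _ (by positivity))
  have hev : ∀ᶠ w in 𝓝[D] p, ((-c / 4 : ℝ) : EReal) < φ w :=
    hlim.eventually (lt_mem_nhds (by exact_mod_cast (by linarith : -c / 4 < 0)))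
  obtain ⟨δ₀, hδ₀, hδb⟩ := Metric.mem_nhdsWithin_iff.1 hev
  set δ := min δ₀ (R / 2) with hδ
  have hδ0 : 0 < δ := by positivity
  have hδR : δ ≤ R / 2 := min_le_right _ _
  obtain ⟨κ, hκ, hκ1, hstep⟩ := step1 (p := p) (R := R) (c := c) (δ := δ) hD hRP hneg hlow hδ0 hδR
    hc0 (fun w hw h => hc w hw (by simpa [dist_eq_norm] using h)) (by
      intro w hw h
      have h1 : w ∈ ball p δ₀ := by
        rw [mem_ball, dist_eq_norm]; exact h.trans_le (min_le_left _ _)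
      have h2 : ((-c / 4 : ℝ) : EReal) < φ w := hδb ⟨h1, hw⟩
      have h3 : ((-c / 4 : ℝ) : EReal) ≤ ((u w : ℝ) : EReal) := by
        rw [hco w hw]; exact h2.le.trans (le_max_left _ _)
      exact_mod_cast h3)
  have hVR : ball p (δ / 4) ⊆ ball p R := ball_subset_ball (by linarith)
  obtain ⟨c₂, hc₂, hcV⟩ := hpk (ball p (δ / 4)) (ball_mem_nhds _ (by positivity))
  have hL0 : 0 < Real.log (2 / κ) := Real.log_pos (by rw [lt_div_iff₀ hκ]; linarith)
  refine ⟨ball p (δ / 4), isOpen_ball, mem_ball_self (by positivity), hVR.trans hRU,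
    Real.log (2 / κ) / c₂, by positivity, ?_⟩
  rintro z ⟨hzD, hzV⟩ X
  set m := Real.log (2 / κ) / c₂ with hm
  have hm0 : 0 < m := by positivity
  have hr1 : Real.exp (m * u z) ≤ 1 := by
    rw [Real.exp_le_one_iff]
    exact mul_nonpos_of_nonneg_of_nonpos hm0.le (hneg z hzD)
  have hmain : Real.exp (m * u z) * kobayashi (D ∩ U) z X ≤ kobayashi D z X := by
    refine kob_scale (Real.exp_pos _) hr1 ?_
    intro f hf hfD hf0 l hl
    refine step2 (U := U) (V := ball p (δ / 4)) hD hRP hneg hκ hκ1 hc₂ ?_ hcV hf hfD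
      (by rw [hf0]; exact hzV) l (hl.trans_le hr1) (by rw [hf0]; exact hl)
    intro g hg hgD hgV ζ hζ
    apply hRU
    rw [mem_ball, dist_eq_norm]
    refine hstep g hg hgD ?_ ζ hζ
    rw [mem_ball, dist_eq_norm] at hgV
    exact hgV
  have hexp : erexp ((m : EReal) * φ z) ≤ Real.exp (m * u z) := by
    unfold erexp
    split_ifs with h1 h2
    · exact (Real.exp_pos _).le
    · exact (Real.exp_pos _).le
    · have hbot : φ z ≠ ⊥ := by
        intro h
        exact h1 (by rw [h]; exact EReal.coe_mul_bot_of_pos hm0)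
      have hx := EReal.coe_toReal (htop z hzD).ne hbot
      rw [Real.exp_le_exp, EReal.toReal_mul, EReal.toReal_coe]
      refine mul_le_mul_of_nonneg_left ?_ hm0.le
      have : (((φ z).toReal : ℝ) : EReal) ≤ ((u z : ℝ) : EReal) := by
        rw [hx, hco z hzD]; exact le_max_left _ _
      exact_mod_cast this
  exact (mul_le_mul_of_nonneg_right hexp (kob_nonneg _ _ _)).trans hmain
end
end

section
/- Let D be a domain in ℂⁿ and let φ be a psh peak function for a point p ∈ ∂D. Then for any bounded open neighborhood U of p there exist an open neighborhood V ⊂ U of p and a constant m > 0 such that for all z ∈ D ∩ V and all X ∈ ℂⁿ one has A_D(z;X) ≥ e^{mφ(z)} A_{D∩U}(z;X). -/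
open Set Metric Filter Topology
open scoped Classical

noncomputable section

/-- The pluricomplex Green function of `D` with pole at `z`:
`g_D(z,w) = sup {u(w) : u psh on D, u < 0, u ≤ log‖·-z‖ + C near z for some C}`. -/
def greenFn {n : ℕ} (D : Set (Cn n)) (z w : Cn n) : EReal :=
  sSup {t : EReal | ∃ u : Cn n → EReal, PSHOn u D ∧ (∀ x ∈ D, u x < 0) ∧
    (∃ C : ℝ, ∀ᶠ x in 𝓝[D] z, u x ≤ ((Real.log ‖x - z‖ + C : ℝ) : EReal)) ∧ t = u w}

/-- The Azukawa metric of `D`: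
`A_D(z;X) = limsup_{λ→0, λ≠0} exp(g_D(z, z+λX)) / |λ|`. -/
def azukawa {n : ℕ} (D : Set (Cn n)) (z X : Cn n) : ℝ :=
  Filter.limsup (fun lam : ℂ => erexp (greenFn D z (z + lam • X)) / ‖lam‖) (𝓝[≠] (0:ℂ))

/-- Average over a full period. -/
def avg (g : ℝ → ℝ) : ℝ := (1 / (2 * Real.pi)) * ∫ θ in (0:ℝ)..(2 * Real.pi), g θ

lemma avg_eq_circleAverage (h : ℂ → ℝ) (c : ℂ) (r : ℝ) :
    avg (fun θ => h (c + (r : ℂ) * Complex.exp (θ * Complex.I))) = Real.circleAverage h c r := by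
  simp [avg, Real.circleAverage_def, circleMap]

lemma avg_mono {g h : ℝ → ℝ} (hg : Continuous g) (hh : Continuous h)
    (H : ∀ θ ∈ Icc 0 (2 * Real.pi), g θ ≤ h θ) : avg g ≤ avg h := by
  unfold avg
  apply mul_le_mul_of_nonneg_left _ (by positivity)
  exact intervalIntegral.integral_mono_on (by positivity) (hg.intervalIntegrable _ _)
    (hh.intervalIntegrable _ _) H

lemma avg_add {g h : ℝ → ℝ} (hg : Continuous g) (hh : Continuous h) :
    avg (fun θ => g θ + h θ) = avg g + avg h := by
  unfold avg
  rw [intervalIntegral.integral_add (hg.intervalIntegrable _ _) (hh.intervalIntegrable _ _)]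
  ring

lemma avg_const (c : ℝ) : avg (fun _ => c) = c := by
  unfold avg
  have := Real.pi_pos
  simp
  field_simp

lemma avg_mul (m : ℝ) (g : ℝ → ℝ) : avg (fun θ => m * g θ) = m * avg g := by
  unfold avg
  rw [intervalIntegral.integral_const_mul]
  ring

lemma mem_sphere_circ (c : ℂ) {t : ℝ} (ht : 0 < t) (θ : ℝ) :
    c + (t : ℂ) * Complex.exp (θ * Complex.I) ∈ sphere c t := by
  simp [Complex.norm_exp_ofReal_mul_I, abs_of_pos ht]

/-- Maximum principle for usc functions with local sub-mean value property. -/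
lemma max_principle (K O : Set ℂ) (hK : IsCompact K) (v : ℂ → EReal)
    (hv : UpperSemicontinuousOn v K) (hvt : ∀ x ∈ K, v x < ⊤) (q : ℂ → ℝ) (hq : ContinuousOn q K)
    (hO : ∀ x ∈ O, ∃ t : ℝ, 0 < t ∧ closedBall x t ⊆ K ∧
      InnerProductSpace.HarmonicOnNhd q (closedBall x t) ∧
      ∀ g : ℝ → ℝ, Continuous g →
        (∀ θ : ℝ, v (x + (t : ℂ) * Complex.exp (θ * Complex.I)) ≤ (g θ : EReal)) →
        v x ≤ ((avg g : ℝ) : EReal))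
    (hb : ∀ x ∈ K, x ∉ O → v x ≤ (q x : EReal)) :
    ∀ x ∈ K, v x ≤ (q x : EReal) := by
  intro w hw
  by_contra hcon
  rw [not_le] at hcon
  obtain ⟨B, hB⟩ : ∃ B : ℝ, ∀ x ∈ K, ‖x‖ ^ 2 ≤ B := by
    obtain ⟨B, hB⟩ := hK.bddAbove_image (f := fun x : ℂ => ‖x‖ ^ 2) (by fun_prop)
    exact ⟨B, fun x hx => hB ⟨x, hx, rfl⟩⟩
  have hB0 : 0 ≤ B := le_trans (by positivity) (hB w hw)
  have hwb : v w ≠ ⊥ := fun h => by simp [h] at hcon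
  obtain ⟨a, ha⟩ : ∃ a : ℝ, v w = (a : EReal) :=
    ⟨(v w).toReal, (EReal.coe_toReal (hvt w hw).ne hwb).symm⟩
  rw [ha, EReal.coe_lt_coe_iff] at hcon
  obtain ⟨η, hη, hηB⟩ : ∃ η : ℝ, 0 < η ∧ η * B < a - q w := by
    refine ⟨(a - q w) / (2 * (B + 1)), div_pos (by linarith) (by linarith), ?_⟩
    rw [div_mul_eq_mul_div, div_lt_iff₀ (by linarith)]
    nlinarith
  have hF : UpperSemicontinuousOn (fun x => v x + ((-q x + η * ‖x‖ ^ 2 : ℝ) : EReal)) K := by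
    apply UpperSemicontinuousOn.add' hv
    · apply ContinuousOn.upperSemicontinuousOn
      apply continuous_coe_real_ereal.comp_continuousOn
      fun_prop
    · intro x hx
      exact EReal.continuousAt_add (Or.inr (EReal.coe_ne_bot _)) (Or.inr (EReal.coe_ne_top _))
  obtain ⟨x, hx, hmax⟩ := hF.exists_isMaxOn ⟨w, hw⟩ hK
  have h1 := hmax hw
  simp only [mem_ofPred_eq, ha] at h1
  have hxb : v x ≠ ⊥ := by
    intro h
    rw [h, EReal.bot_add] at h1
    rw [← EReal.coe_add] at h1
    exact EReal.coe_ne_bot _ (le_bot_iff.mp h1)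
  obtain ⟨A, hA⟩ : ∃ a : ℝ, v x = (a : EReal) :=
    ⟨(v x).toReal, (EReal.coe_toReal (hvt x hx).ne hxb).symm⟩
  rw [hA] at h1
  norm_cast at h1
  have hxO : x ∈ O := by
    by_contra hxO
    have h2 := hb x hx hxO
    rw [hA] at h2
    norm_cast at h2
    have := hB x hx
    have h4 : 0 ≤ η * ‖w‖ ^ 2 := by positivity
    nlinarith
  obtain ⟨t, ht, htK, hth, hsub⟩ := hO x hxO
  set Q : ℂ → ℝ := fun y => q y + (((A - q x - η * t ^ 2 : ℝ) : ℂ) -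
    2 * η * (starRingEnd ℂ x * (y - x))).re with hQ
  have hQh : InnerProductSpace.HarmonicOnNhd Q (closedBall x |t|) := by
    rw [abs_of_pos ht]
    intro y hy
    refine (hth y hy).add (AnalyticAt.harmonicAt_re ?_)
    fun_prop
  have hQa := InnerProductSpace.HarmonicOnNhd.circleAverage_eq hQh
  have hcont : Continuous (fun θ : ℝ => Q (x + (t : ℂ) * Complex.exp (θ * Complex.I))) := by
    have : ContinuousOn Q K := by
      refine hq.add ?_
      fun_prop
    refine this.comp_continuous (by fun_prop) fun θ => ?_
    exact htK (sphere_subset_closedBall (mem_sphere_circ x ht θ))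
  have := hsub _ hcont (by
    intro θ
    set y := x + (t : ℂ) * Complex.exp (θ * Complex.I) with hy
    have hyS : y ∈ sphere x t := mem_sphere_circ x ht θ
    have hyK : y ∈ K := htK (sphere_subset_closedBall hyS)
    have h5 := hmax hyK
    simp only [mem_ofPred_eq, hA] at h5
    have hyd : ‖y - x‖ = t := by simpa [dist_eq_norm] using hyS
    have hn : ‖y‖ ^ 2 = ‖x‖ ^ 2 + t ^ 2 + 2 * (starRingEnd ℂ x * (y - x)).re := by
      rw [← hyd]
      simp only [Complex.sq_norm, Complex.normSq_apply, Complex.mul_re, Complex.conj_re,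
        Complex.conj_im, Complex.sub_re, Complex.sub_im]
      ring
    have hQy : Q y = q y + (A - q x - η * t ^ 2) - 2 * η * (starRingEnd ℂ x * (y - x)).re := by
      simp only [hQ]
      have : (2 * (η : ℂ) * (starRingEnd ℂ x * (y - x))).re
          = 2 * η * (starRingEnd ℂ x * (y - x)).re := by
        rw [show (2 * (η : ℂ)) = ((2 * η : ℝ) : ℂ) by push_cast; ring, Complex.re_ofReal_mul]
      rw [Complex.sub_re, this, Complex.ofReal_re]
      ring
    by_cases hyb : v y = ⊥
    · rw [hyb]; exact bot_le
    obtain ⟨b, hb'⟩ : ∃ a : ℝ, v y = (a : EReal) :=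
      ⟨(v y).toReal, (EReal.coe_toReal (hvt y hyK).ne hyb).symm⟩
    rw [hb'] at h5 ⊢
    norm_cast at h5 ⊢
    rw [hQy]
    rw [hn] at h5
    nlinarith)
  rw [avg_eq_circleAverage, hQa, hA] at this
  norm_cast at this
  simp [hQ] at this
  have : 0 < η * t ^ 2 := by positivity
  simp [← Complex.ofReal_pow] at *
  nlinarith

lemma exists_poly_of_span (q : C(AddCircle (2 * Real.pi), ℂ))
    (hq : q ∈ Submodule.span ℂ (range (@fourier (2 * Real.pi)))) :
    ∃ P : ℂ → ℂ, Differentiable ℂ P ∧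
      ∀ θ : ℝ, (P (Complex.exp (θ * Complex.I))).re = (q (θ : AddCircle (2 * Real.pi))).re := by
  have key : ∀ (c : ℂ) (k : ℤ), ∃ P : ℂ → ℂ, Differentiable ℂ P ∧
      ∀ θ : ℝ, (P (Complex.exp (θ * Complex.I))).re
        = (c * fourier k (θ : AddCircle (2 * Real.pi))).re := by
    intro c k
    have hf : ∀ θ : ℝ, fourier k (θ : AddCircle (2 * Real.pi))
        = Complex.exp (k * (θ * Complex.I)) := by
      intro θ
      rw [fourier_coe_apply]
      congr 1
      have : (Real.pi : ℂ) ≠ 0 := by exact_mod_cast Real.pi_ne_zero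
      push_cast
      field_simp
    obtain ⟨j, rfl | rfl⟩ := k.eq_nat_or_neg
    · refine ⟨fun z => c * z ^ j, by fun_prop, fun θ => ?_⟩
      beta_reduce
      rw [hf, ← Complex.exp_nat_mul]
      simp
    · refine ⟨fun z => (starRingEnd ℂ c) * z ^ j, by fun_prop, fun θ => ?_⟩
      beta_reduce
      rw [hf, ← Complex.exp_nat_mul, ← Complex.conj_re, map_mul, Complex.conj_conj,
        ← Complex.exp_conj]
      simp
  suffices H : ∀ c : ℂ, ∃ P : ℂ → ℂ, Differentiable ℂ P ∧
      ∀ θ : ℝ, (P (Complex.exp (θ * Complex.I))).re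
        = (c * q (θ : AddCircle (2 * Real.pi))).re by
    simpa using H 1
  induction hq using Submodule.span_induction with
  | mem x hx =>
    obtain ⟨k, rfl⟩ := hx
    exact fun c => key c k
  | zero => exact fun c => ⟨fun _ => 0, by fun_prop, by simp⟩
  | add x y _ _ hx hy =>
    intro c
    obtain ⟨P, h1, h2⟩ := hx c
    obtain ⟨Q, h3, h4⟩ := hy c
    refine ⟨fun z => P z + Q z, by fun_prop, fun θ => ?_⟩
    rw [ContinuousMap.add_apply, mul_add, Complex.add_re, Complex.add_re, h2, h4]
  | smul a x _ hx =>
    intro c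
    obtain ⟨P, h1, h2⟩ := hx (c * a)
    exact ⟨P, h1, fun θ => by rw [h2]; simp [mul_assoc]⟩

lemma avg_pow_bound (n : ℕ) : avg (fun θ => (θ / (2 * Real.pi)) ^ n) = 1 / (n + 1) ∧
    avg (fun θ => (1 - θ / (2 * Real.pi)) ^ n) = 1 / (n + 1) := by
  have hpi := Real.pi_pos
  constructor
  · unfold avg
    rw [intervalIntegral.integral_comp_div (fun x => x ^ n) (by positivity)]
    simp
    field_simp
  · unfold avg
    rw [intervalIntegral.integral_comp_sub_div (fun x => x ^ n) (by positivity) 1]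
    simp
    field_simp

lemma exists_harmonic_majorant (f : ℝ → EReal) (hf : Function.Periodic f (2 * Real.pi))
    (g : ℝ → ℝ) (hg : Continuous g) (hfg : ∀ θ, f θ ≤ (g θ : EReal)) (N : ℝ)
    (hN : ∀ θ, f θ ≤ (N : EReal)) (ε : ℝ) (hε : 0 < ε) (r : ℝ) (hr : 0 < r) :
    ∃ P : ℂ → ℂ, Differentiable ℂ P ∧
      (∀ θ : ℝ, f θ ≤ (((P ((r : ℂ) * Complex.exp (θ * Complex.I))).re : ℝ) : EReal)) ∧
      (∀ θ : ℝ, (P ((r : ℂ) * Complex.exp (θ * Complex.I))).re ≤ N + ε) ∧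
      (P 0).re ≤ avg g + ε := by
  have hpi := Real.pi_pos
  set T := 2 * Real.pi with hT
  have hT0 : 0 < T := by positivity
  have : Fact (0 < T) := ⟨hT0⟩
  set K := max 0 (g T - g 0) with hK
  set K' := max 0 (g 0 - g T) with hK'
  have hK0 : 0 ≤ K := le_max_left _ _
  have hK0' : 0 ≤ K' := le_max_left _ _
  have hKK : g 0 + K = g T + K' := by
    rw [hK, hK']
    rcases le_total (g 0) (g T) with h | h
    · rw [max_eq_right (by linarith), max_eq_left (by linarith)]; ring
    · rw [max_eq_left (by linarith), max_eq_right (by linarith)]; ring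
  obtain ⟨n, hn1, hn⟩ : ∃ n : ℕ, n ≠ 0 ∧ (K + K') / (n + 1) < ε / 3 := by
    obtain ⟨n, hn⟩ := exists_nat_gt ((K + K') / (ε / 3))
    refine ⟨n + 1, by simp, ?_⟩
    rw [div_lt_iff₀ (by positivity)] at hn ⊢
    push_cast
    nlinarith
  set g1 : ℝ → ℝ := fun θ => g θ + (K * (1 - θ / T) ^ n + K' * (θ / T) ^ n) with hg1
  have hg1c : Continuous g1 := by fun_prop
  set g0 : ℝ → ℝ := fun θ => min (g1 θ) N with hg0
  have hg0c : Continuous g0 := by fun_prop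
  have havg : avg g0 ≤ avg g + ε / 3 := by
    have h1 : avg g0 ≤ avg g1 := avg_mono hg0c hg1c fun θ _ => min_le_left _ _
    have h2 : avg g1 = avg g + (K * (1 / (n + 1)) + K' * (1 / (n + 1))) := by
      rw [hg1, avg_add hg (by fun_prop), avg_add (by fun_prop) (by fun_prop), avg_mul, avg_mul,
        (avg_pow_bound n).1, (avg_pow_bound n).2]
    have h3 : K * (1 / (n + 1)) + K' * (1 / (n + 1)) = (K + K') / ((n : ℝ) + 1) := by ring
    linarith
  have hfg0 : ∀ θ ∈ Icc 0 T, f θ ≤ (g0 θ : EReal) := by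
    intro θ hθ
    have h1 : 0 ≤ θ / T := div_nonneg hθ.1 hT0.le
    have h2 : 0 ≤ 1 - θ / T := by
      have := (div_le_one hT0).2 hθ.2
      linarith
    have h3 : g θ ≤ g1 θ := by
      simp only [hg1]
      have : 0 ≤ K * (1 - θ / T) ^ n + K' * (θ / T) ^ n := by positivity
      linarith
    rcases le_total (g1 θ) N with h | h
    · simp only [hg0, min_eq_left h]
      exact (hfg θ).trans (by exact_mod_cast h3)
    · simp only [hg0, min_eq_right h]
      exact hN θ
  have hends : g0 0 = g0 T := by
    simp only [hg0, hg1]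
    rw [div_self hT0.ne']
    simp [hn1, hKK]
  set G : C(AddCircle T, ℂ) := ⟨AddCircle.liftIco T 0 (fun θ => ((g0 θ : ℝ) : ℂ)),
    AddCircle.liftIco_zero_continuous (by rw [hends]) (by fun_prop)⟩ with hG
  have hGv : ∀ θ ∈ Ico 0 T, G (θ : AddCircle T) = ((g0 θ : ℝ) : ℂ) := by
    intro θ hθ
    exact AddCircle.liftIco_zero_coe_apply (f := fun θ => ((g0 θ : ℝ) : ℂ)) hθ
  have hmem : G ∈ (Submodule.span ℂ (range (@fourier T))).topologicalClosure := by
    rw [span_fourier_closure_eq_top]; trivial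
  obtain ⟨q, hq, hqG⟩ := Metric.mem_closure_iff.1 hmem (ε / 3) (by positivity)
  obtain ⟨P, hP, hPq⟩ := exists_poly_of_span q hq
  have hclose : ∀ θ : ℝ, |(q (θ : AddCircle T)).re - (G (θ : AddCircle T)).re| ≤ ε / 3 := by
    intro θ
    rw [← Complex.sub_re]
    refine (Complex.abs_re_le_norm _).trans ?_
    rw [← dist_eq_norm, dist_comm]
    exact (ContinuousMap.dist_apply_le_dist _).trans hqG.le
  have hrep : ∀ θ : ℝ, ∃ θ' ∈ Ico 0 T, (θ : AddCircle T) = (θ' : AddCircle T) ∧ f θ = f θ' ∧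
      Complex.exp (θ * Complex.I) = Complex.exp (θ' * Complex.I) := by
    intro θ
    refine ⟨toIcoMod hT0 0 θ, by simpa using toIcoMod_mem_Ico hT0 0 θ, ?_, ?_, ?_⟩
    · rw [toIcoMod, AddCircle.coe_sub, AddCircle.coe_zsmul, AddCircle.coe_period]; simp
    · rw [toIcoMod]
      exact (hf.sub_zsmul_eq _).symm
    · rw [toIcoMod]
      rw [Complex.exp_eq_exp_iff_exists_int]
      refine ⟨toIcoDiv hT0 0 θ, ?_⟩
      push_cast [hT]
      simp
      ring
  have hre : ∀ z : ℂ, ((r : ℂ) * z) / r = z := by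
    intro z
    have : (r : ℂ) ≠ 0 := by exact_mod_cast hr.ne'
    field_simp
  refine ⟨fun z => P (z / r) + ((ε / 3 : ℝ) : ℂ), ?_, ?_, ?_, ?_⟩
  · have : Differentiable ℂ (fun z : ℂ => z / r) := by fun_prop
    exact (hP.comp this).add_const _
  · intro θ
    obtain ⟨θ', h1, h2, h3, h4⟩ := hrep θ
    beta_reduce
    rw [h3, h4, hre, Complex.add_re, hPq, Complex.ofReal_re]
    refine (hfg0 θ' ⟨h1.1, h1.2.le⟩).trans ?_
    have := hclose θ'
    rw [hGv θ' h1, Complex.ofReal_re, abs_le] at this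
    norm_cast
    linarith
  · intro θ
    obtain ⟨θ', h1, h2, h3, h4⟩ := hrep θ
    beta_reduce
    rw [h4, hre, Complex.add_re, hPq, Complex.ofReal_re]
    have := hclose θ'
    rw [hGv θ' h1, Complex.ofReal_re, abs_le] at this
    have : g0 θ' ≤ N := min_le_right _ _
    linarith
  · have hmean : avg (fun θ : ℝ => (P (0 + ((1 : ℝ) : ℂ) * Complex.exp (θ * Complex.I))).re)
        = (P 0).re := by
      rw [avg_eq_circleAverage (fun z => (P z).re) 0 1]
      apply InnerProductSpace.HarmonicOnNhd.circleAverage_eq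
      intro y _
      exact AnalyticAt.harmonicAt_re (hP.analyticAt y)
    have hle : avg (fun θ : ℝ => (P (0 + ((1 : ℝ) : ℂ) * Complex.exp (θ * Complex.I))).re)
        ≤ avg (fun θ => g0 θ + ε / 3) := by
      apply avg_mono
      · exact Complex.continuous_re.comp (hP.continuous.comp (by fun_prop))
      · fun_prop
      · intro θ hθ
        rw [show (0 : ℂ) + ((1 : ℝ) : ℂ) * Complex.exp (θ * Complex.I)
          = Complex.exp (θ * Complex.I) by simp, hPq]
        have hGθ : (G (θ : AddCircle T)).re = g0 θ := by
          rcases hθ.2.lt_or_eq with h | h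
          · rw [hGv θ ⟨hθ.1, h⟩, Complex.ofReal_re]
          · have h0 : (θ : AddCircle T) = ((0 : ℝ) : AddCircle T) := by
              rw [h]; simp [AddCircle.coe_period]
            rw [h0, hGv 0 ⟨le_rfl, hT0⟩, Complex.ofReal_re, hends, h]
        have := hclose θ
        rw [hGθ, abs_le] at this
        linarith
    rw [hmean, avg_add hg0c continuous_const, avg_const] at hle
    simp only [zero_div, Complex.add_re, Complex.ofReal_re]
    linarith

lemma circ_of_norm {r : ℝ} {w : ℂ} (hw : ‖w‖ = r) :
    (r : ℂ) * Complex.exp (w.arg * Complex.I) = w := by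
  rw [← hw]; exact Complex.norm_mul_exp_arg_mul_I w

lemma norm_circ {r : ℝ} (hr : 0 < r) (θ : ℝ) :
    ‖(r : ℂ) * Complex.exp (θ * Complex.I)‖ = r := by
  simp [Complex.norm_exp_ofReal_mul_I, abs_of_pos hr]

lemma periodic_circ {α : Type*} (F : ℂ → α) (r : ℝ) :
    Function.Periodic (fun θ : ℝ => F ((r : ℂ) * Complex.exp (θ * Complex.I)))
      (2 * Real.pi) := by
  intro θ
  beta_reduce
  congr 2
  push_cast
  rw [add_mul, Complex.exp_add, Complex.exp_two_pi_mul_I, mul_one]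

lemma EReal_le_of_forall_eps {x : EReal} {y : ℝ}
    (h : ∀ ε : ℝ, 0 < ε → x ≤ ((y + ε : ℝ) : EReal)) : x ≤ (y : EReal) := by
  by_contra hc
  rw [not_le] at hc
  obtain ⟨c, h1, h2⟩ := EReal.lt_iff_exists_real_btwn.1 hc
  have h3 : y < c := by exact_mod_cast h1
  have := h (c - y) (by linarith)
  rw [add_sub_cancel] at this
  exact absurd (h2.trans_le this) (lt_irrefl _)

section PSH
variable {n : ℕ} {u v : Cn n → EReal} {D E : Set (Cn n)}

lemma PSHOn.mean (h : PSHOn u D) {a b : Cn n} {r : ℝ} (hr : 0 < r)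
    (hd : ∀ t : ℂ, ‖t‖ ≤ r → a + t • b ∈ D) {g : ℝ → ℝ} (hg : Continuous g)
    (hug : ∀ θ : ℝ, u (a + ((r : ℂ) * Complex.exp (θ * Complex.I)) • b) ≤ (g θ : EReal)) :
    u a ≤ ((avg g : ℝ) : EReal) :=
  h.2 a (by simpa using hd 0 (by simpa using hr.le)) b r hr hd g hg hug

lemma PSHOn.intro (h1 : UpperSemicontinuousOn u D)
    (h2 : ∀ (a b : Cn n) (r : ℝ), a ∈ D → 0 < r → (∀ t : ℂ, ‖t‖ ≤ r → a + t • b ∈ D) →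
      ∀ g : ℝ → ℝ, Continuous g →
      (∀ θ : ℝ, u (a + ((r : ℂ) * Complex.exp (θ * Complex.I)) • b) ≤ (g θ : EReal)) →
      u a ≤ ((avg g : ℝ) : EReal)) : PSHOn u D :=
  ⟨h1, fun a ha b r hr hd g hg hug => h2 a b r ha hr hd g hg hug⟩

lemma PSHOn.mono' (h : PSHOn u D) (hE : E ⊆ D) : PSHOn u E :=
  PSHOn.intro (h.1.mono hE) fun _ _ _ _ hr hd _ hg hug =>
    h.mean hr (fun t ht => hE (hd t ht)) hg hug

lemma PSHOn.congr' (h : PSHOn u D) (hE : ∀ x ∈ D, v x = u x) : PSHOn v D := by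
  refine PSHOn.intro ?_ ?_
  · intro x hx y hy
    rw [hE x hx] at hy
    filter_upwards [h.1 x hx y hy, self_mem_nhdsWithin] with w hw hwD
    rwa [hE w hwD]
  · intro a b r ha hr hd g hg hug
    rw [hE a ha]
    refine h.mean hr hd hg fun θ => ?_
    rw [← hE _ (hd _ (norm_circ hr θ).le)]
    exact hug θ

lemma PSHOn.const (c : ℝ) : PSHOn (fun _ : Cn n => (c : EReal)) D := by
  refine PSHOn.intro upperSemicontinuousOn_const ?_
  intro a b r ha hr hd g hg hug
  norm_cast
  rw [← avg_const c]
  exact avg_mono continuous_const hg fun θ _ => by exact_mod_cast hug θ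

lemma PSHOn.sup (hu : PSHOn u D) (hv : PSHOn v D) : PSHOn (fun x => max (u x) (v x)) D := by
  refine PSHOn.intro (hu.1.sup hv.1) ?_
  intro a b r ha hr hd g hg hug
  refine max_le ?_ ?_
  · exact hu.mean hr hd hg fun θ => (le_max_left _ _).trans (hug θ)
  · exact hv.mean hr hd hg fun θ => (le_max_right _ _).trans (hug θ)

lemma mul_le_coe_iff {m : ℝ} (hm : 0 < m) (x : EReal) (y : ℝ) :
    (m : EReal) * x ≤ (y : EReal) ↔ x ≤ ((m⁻¹ * y : ℝ) : EReal) := by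
  induction x with
  | bot => simp [EReal.coe_mul_bot_of_pos hm]
  | top => simp [EReal.coe_mul_top_of_pos hm, ← EReal.coe_mul]
  | coe x =>
    norm_cast
    rw [inv_mul_eq_div, le_div_iff₀ hm, mul_comm]

lemma mul_lt_coe_iff {m : ℝ} (hm : 0 < m) (x : EReal) (y : ℝ) :
    (m : EReal) * x < (y : EReal) ↔ x < ((m⁻¹ * y : ℝ) : EReal) := by
  induction x with
  | bot => simp only [EReal.coe_mul_bot_of_pos hm, EReal.bot_lt_coe]
  | top => simp [EReal.coe_mul_top_of_pos hm, ← EReal.coe_mul]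
  | coe x =>
    norm_cast
    rw [inv_mul_eq_div, lt_div_iff₀ hm, mul_comm]

lemma PSHOn.smul {m : ℝ} (hm : 0 < m) (hu : PSHOn u D) :
    PSHOn (fun x => (m : EReal) * u x) D := by
  refine PSHOn.intro ?_ ?_
  · intro x hx y hy
    obtain ⟨c, hc, hcy⟩ := EReal.lt_iff_exists_real_btwn.1 hy
    rw [mul_lt_coe_iff hm] at hc
    filter_upwards [hu.1 x hx _ hc] with w hw
    rw [← mul_lt_coe_iff hm] at hw
    exact hw.trans hcy
  · intro a b r ha hr hd g hg hug
    rw [mul_le_coe_iff hm, ← avg_mul]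
    refine hu.mean hr hd (by fun_prop) fun θ => ?_
    rw [← mul_le_coe_iff hm]
    exact hug θ

lemma insertion (f₁ f₂ : ℝ → EReal) (h₁ : UpperSemicontinuous f₁) (h₂ : UpperSemicontinuous f₂)
    (ht₁ : ∀ x, f₁ x < ⊤) (ht₂ : ∀ x, f₂ x < ⊤) (g : ℝ → ℝ) (hg : Continuous g)
    (h : ∀ x, f₁ x + f₂ x < (g x : EReal)) :
    ∃ g₁ g₂ : ℝ → ℝ, Continuous g₁ ∧ Continuous g₂ ∧ (∀ x, f₁ x ≤ (g₁ x : EReal)) ∧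
      (∀ x, f₂ x ≤ (g₂ x : EReal)) ∧ ∀ x, g₁ x + g₂ x = g x := by
  obtain ⟨G, hG⟩ := exists_continuous_forall_mem_convex_of_local_const
    (t := fun y : ℝ => {c : ℝ | f₁ y ≤ (c : EReal) ∧ f₂ y ≤ ((g y - c : ℝ) : EReal)}) (by
      intro x
      apply Set.OrdConnected.convex
      refine ⟨fun c hc d hd e he => ⟨hc.1.trans ?_, hd.2.trans ?_⟩⟩
      · exact_mod_cast he.1
      · have := he.2
        norm_cast
        linarith) (by
      intro x
      obtain ⟨c, d, hc, hd, hcd⟩ : ∃ c d : ℝ, f₁ x < c ∧ f₂ x < d ∧ d < g x - c := by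
        have hx := h x
        have h1 := ht₁ x
        have h2 := ht₂ x
        generalize f₁ x = p at *
        generalize f₂ x = q at *
        induction q with
        | top => simp at h2
        | bot =>
          obtain ⟨c, hc, -⟩ := EReal.lt_iff_exists_real_btwn.1 h1
          exact ⟨c, g x - c - 1, hc, EReal.bot_lt_coe _, by linarith⟩
        | coe q =>
          induction p with
          | top => simp at h1
          | bot => exact ⟨g x - q - 2, q + 1, EReal.bot_lt_coe _, by norm_cast; linarith,
              by linarith⟩
          | coe p =>
            norm_cast at hx
            refine ⟨p + (g x - p - q) / 3, q + (g x - p - q) / 3, ?_, ?_, ?_⟩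
            · norm_cast; linarith
            · norm_cast; linarith
            · linarith
      refine ⟨c, ?_⟩
      have h3 : ∀ᶠ y in 𝓝 x, d < g y - c :=
        (continuous_const.tendsto x).eventually_lt ((hg.sub continuous_const).tendsto x) hcd
      filter_upwards [h₁ x _ hc, h₂ x _ hd, h3] with y h4 h5 h6
      refine ⟨h4.le, h5.le.trans ?_⟩
      exact_mod_cast h6.le)
  refine ⟨G, fun x => g x - G x, G.continuous, hg.sub G.continuous, fun x => (hG x).1,
    fun x => (hG x).2, fun x => by ring⟩

lemma usc_circ (hu : UpperSemicontinuousOn u D) {a b : Cn n} {r : ℝ} (hr : 0 < r)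
    (hd : ∀ t : ℂ, ‖t‖ ≤ r → a + t • b ∈ D) :
    UpperSemicontinuous
      (fun θ : ℝ => u (a + ((r : ℂ) * Complex.exp (θ * Complex.I)) • b)) := by
  rw [← upperSemicontinuousOn_univ_iff]
  refine hu.comp (g := fun θ : ℝ => a + ((r : ℂ) * Complex.exp (θ * Complex.I)) • b)
    (by fun_prop) fun θ _ => hd _ (norm_circ hr θ).le

lemma EReal_lt_coe_add_eps {x : EReal} {y ε : ℝ} (hε : 0 < ε) (h : x ≤ (y : EReal)) :
    x < ((y + ε : ℝ) : EReal) := h.trans_lt (by norm_cast; linarith)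

lemma PSHOn.add' (hu : PSHOn u D) (hv : PSHOn v D) (hut : ∀ x ∈ D, u x < ⊤)
    (hvt : ∀ x ∈ D, v x < ⊤) : PSHOn (fun x => u x + v x) D := by
  refine PSHOn.intro ?_ ?_
  · refine hu.1.add' hv.1 fun x hx => EReal.continuousAt_add ?_ ?_
    · exact Or.inl (hut x hx).ne
    · exact Or.inr (hvt x hx).ne
  · intro a b r ha hr hd g hg hug
    refine EReal_le_of_forall_eps fun ε hε => ?_
    obtain ⟨g₁, g₂, c1, c2, k1, k2, k3⟩ := insertion _ _ (usc_circ hu.1 hr hd)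
      (usc_circ hv.1 hr hd) (fun θ => hut _ (hd _ (norm_circ hr θ).le))
      (fun θ => hvt _ (hd _ (norm_circ hr θ).le)) (fun θ => g θ + ε) (by fun_prop)
      (fun θ => EReal_lt_coe_add_eps hε (hug θ))
    have h1 := hu.mean hr hd c1 k1
    have h2 := hv.mean hr hd c2 k2
    have h3 : avg g + ε = avg g₁ + avg g₂ := by
      rw [← avg_const ε, ← avg_add hg continuous_const, ← avg_add c1 c2]
      simp only [k3]
    rw [h3, EReal.coe_add]
    exact add_le_add h1 h2

lemma PSHOn.of_local (hneg : ∀ x ∈ D, u x < 0)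
    (H : ∀ x ∈ D, ∃ W : Set (Cn n), IsOpen W ∧ x ∈ W ∧ W ⊆ D ∧ PSHOn u W) : PSHOn u D := by
  have husc : UpperSemicontinuousOn u D := by
    intro x hx y hy
    obtain ⟨W, hW, hxW, hWD, hu⟩ := H x hx
    have := hu.1 x hxW y hy
    rw [hW.nhdsWithin_eq hxW] at this
    exact nhdsWithin_le_nhds this
  refine PSHOn.intro husc ?_
  intro a b r ha hr hd g hg hug
  refine EReal_le_of_forall_eps fun ε hε => ?_
  obtain ⟨P, hP, hP1, -, hP3⟩ := exists_harmonic_majorant _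
    (periodic_circ (fun w => u (a + w • b)) r) g hg hug 0
    (fun θ => (hneg _ (hd _ (norm_circ hr θ).le)).le) ε hε r hr
  have hMP := max_principle (closedBall 0 r) (ball 0 r) (isCompact_closedBall _ _)
    (fun w => u (a + w • b)) ?_ ?_ (fun w => (P w).re) ?_ ?_ ?_ 0 (by simpa using hr.le)
  · simp only [zero_smul, add_zero] at hMP
    exact hMP.trans (by exact_mod_cast hP3)
  · exact husc.comp (g := fun w : ℂ => a + w • b) (by fun_prop)
      fun w hw => hd w (by simpa using hw)
  · exact fun w hw => (hneg _ (hd w (by simpa using hw))).trans (by simp)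
  · exact (Complex.continuous_re.comp hP.continuous).continuousOn
  · intro w hw
    obtain ⟨W, hW, hxW, hWD, hu⟩ := H (a + w • b) (hd w (by simpa using (ball_subset_closedBall hw)))
    have hopen : IsOpen (ball (0 : ℂ) r ∩ (fun w : ℂ => a + w • b) ⁻¹' W) :=
      isOpen_ball.inter (hW.preimage (by fun_prop))
    obtain ⟨t, ht, hsub⟩ := Metric.nhds_basis_closedBall.mem_iff.1 (hopen.mem_nhds ⟨hw, hxW⟩)
    refine ⟨t, ht, fun x hx => ball_subset_closedBall (hsub hx).1,
      fun y _ => AnalyticAt.harmonicAt_re (hP.analyticAt y), ?_⟩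
    intro g' hg' hug'
    refine hu.mean ht (b := b) (fun s hs => ?_) hg' fun θ => ?_
    · have : w + s ∈ closedBall w t := by simpa using hs
      have := (hsub this).2
      simpa [add_smul, add_assoc] using this
    · have := hug' θ
      simpa [add_smul, add_assoc] using this
  · intro w hw hw'
    have hwr : ‖w‖ = r := by
      simp at hw hw'
      exact le_antisymm hw hw'
    have := hP1 w.arg
    rwa [circ_of_norm hwr] at this

/-- `log (‖w - z‖ / R)` as an extended real. -/
def ell (z : Cn n) (R : ℝ) (w : Cn n) : EReal := ENNReal.log (ENNReal.ofReal (‖w - z‖ / R))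

lemma ell_of_ne {z w : Cn n} {R : ℝ} (hR : 0 < R) (h : w ≠ z) :
    ell z R w = ((Real.log ‖w - z‖ - Real.log R : ℝ) : EReal) := by
  have h1 : 0 < ‖w - z‖ := norm_pos_iff.2 (sub_ne_zero.2 h)
  rw [ell, ENNReal.log_ofReal, if_neg (by have : 0 < ‖w - z‖ / R := by positivity
                                          linarith), Real.log_div h1.ne' hR.ne']

lemma ell_self (z : Cn n) (R : ℝ) : ell z R z = ⊥ := by simp [ell]

lemma ell_psh (z : Cn n) {R : ℝ} (hR : 0 < R) : PSHOn (ell z R) D := by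
  refine PSHOn.intro ?_ ?_
  · apply Continuous.continuousOn _ |>.upperSemicontinuousOn
    unfold ell
    exact ENNReal.continuous_log.comp (ENNReal.continuous_ofReal.comp (by fun_prop))
  intro a b r ha hr hd g hg hug
  by_cases haz : a = z
  · rw [haz, ell_self]; exact bot_le
  rw [ell_of_ne hR haz]
  norm_cast
  set e := a - z with he
  have he0 : 0 < ‖e‖ := norm_pos_iff.2 (sub_ne_zero.2 haz)
  set κ : ℂ := inner ℂ e b with hκ
  have hlow : ∀ t : ℂ, ‖((‖e‖ ^ 2 : ℝ) : ℂ) + t * κ‖ ≤ ‖e‖ * ‖e + t • b‖ := by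
    intro t
    have h1 := norm_inner_le_norm (𝕜 := ℂ) e (e + t • b)
    rw [inner_add_right, inner_smul_right, inner_self_eq_norm_sq_to_K] at h1
    simpa using h1
  have hug' : ∀ θ : ℝ, e + ((r : ℂ) * Complex.exp (θ * Complex.I)) • b ≠ 0 →
      Real.log ‖e + ((r : ℂ) * Complex.exp (θ * Complex.I)) • b‖ - Real.log R ≤ g θ := by
    intro θ hθ
    have hne : a + ((r : ℂ) * Complex.exp (θ * Complex.I)) • b ≠ z := by
      intro h
      apply hθ
      rw [he, ← h]
      abel
    have h2 := hug θ
    rw [ell_of_ne hR hne] at h2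
    norm_cast at h2
    convert h2 using 4
    rw [he]; abel
  by_cases hκ0 : κ = 0
  · rw [← avg_const (Real.log ‖e‖ - Real.log R)]
    refine avg_mono continuous_const hg fun θ _ => ?_
    have h1 := hlow ((r : ℂ) * Complex.exp (θ * Complex.I))
    simp only [hκ0, mul_zero, add_zero, Complex.norm_real, norm_pow, norm_norm] at h1
    have h2 : ‖e‖ ≤ ‖e + ((r : ℂ) * Complex.exp (θ * Complex.I)) • b‖ := by
      rw [sq] at h1
      exact le_of_mul_le_mul_left h1 he0
    have h3 := hug' θ (norm_pos_iff.1 (he0.trans_le h2))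
    have := Real.log_le_log he0 h2
    linarith
  · set a0 : ℂ := -((‖e‖ ^ 2 : ℝ) : ℂ) / κ with ha0
    have hκn : 0 < ‖κ‖ := norm_pos_iff.2 hκ0
    have ha0n : ‖a0‖ = ‖e‖ ^ 2 / ‖κ‖ := by
      rw [ha0, norm_div, norm_neg, Complex.norm_real]
      simp
    have hav := circleAverage_log_norm_sub_const_eq_log_radius_add_posLog (c := 0) (a := a0) hr.ne'
    have hci := circleIntegrable_log_norm_sub_const (c := 0) (a := a0) r
    have hge : Real.log ‖a0‖ ≤ Real.circleAverage (fun w => Real.log ‖w - a0‖) 0 r := by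
      rw [hav]
      have h1 : Real.log (r⁻¹ * ‖(0 : ℂ) - a0‖) ≤ Real.posLog (r⁻¹ * ‖(0 : ℂ) - a0‖) :=
        le_max_right _ _
      have hp : 0 < ‖a0‖ := by rw [ha0n]; positivity
      rw [zero_sub, norm_neg, Real.log_mul (by positivity) (by positivity), Real.log_inv] at h1
      rw [zero_sub, norm_neg]
      linarith
    have hle : Real.circleAverage (fun w => Real.log ‖w - a0‖) 0 r
        ≤ avg (fun θ => g θ + (Real.log ‖e‖ + Real.log R - Real.log ‖κ‖)) := by
      rw [Real.circleAverage_def, smul_eq_mul, avg, one_div]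
      apply mul_le_mul_of_nonneg_left _ (by positivity)
      apply intervalIntegral.integral_mono_ae (by positivity) hci
        (Continuous.intervalIntegrable (by fun_prop) _ _)
      have hcount : (circleMap 0 r ⁻¹' {a0}).Countable :=
        (countable_singleton _).preimage_circleMap 0 hr.ne'
      have hae := hcount.ae_notMem MeasureTheory.volume
      filter_upwards [hae] with θ hθ
      set t := (r : ℂ) * Complex.exp (θ * Complex.I) with ht
      have hct : circleMap 0 r θ = t := by simp [circleMap, ht]
      rw [hct]
      have hta : t ≠ a0 := by
        intro h
        apply hθ
        simp [hct, h]
      have h1 := hlow t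
      have h4 : ((‖e‖ ^ 2 : ℝ) : ℂ) + t * κ = κ * (t - a0) := by
        rw [ha0]; field_simp; ring
      rw [h4, norm_mul] at h1
      have htn : 0 < ‖t - a0‖ := norm_pos_iff.2 (sub_ne_zero.2 hta)
      have h5 : 0 < ‖e + t • b‖ := by
        have h6 : 0 < ‖e‖ * ‖e + t • b‖ := lt_of_lt_of_le (by positivity) h1
        exact pos_of_mul_pos_right h6 he0.le
      have h3 := hug' θ (norm_pos_iff.1 h5)
      have h6 := Real.log_le_log (by positivity) h1
      rw [Real.log_mul hκn.ne' htn.ne', Real.log_mul he0.ne' h5.ne'] at h6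
      linarith
    rw [avg_add hg continuous_const, avg_const] at hle
    rw [ha0n, Real.log_div (by positivity) hκn.ne', Real.log_pow] at hge
    push_cast at hge
    linarith

end PSH

lemma logpole {n : ℕ} {u : Cn n → EReal} {D : Set (Cn n)} (hu : PSHOn u D)
    (hneg : ∀ x ∈ D, u x < 0) {z X : Cn n} {s : ℝ}
    (hd : ∀ t : ℂ, ‖t‖ ≤ s → z + t • X ∈ D) {C : ℝ}
    (hC : ∀ᶠ l : ℂ in 𝓝[≠] 0, u (z + l • X) ≤ ((Real.log ‖l‖ + C : ℝ) : EReal))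
    {P : ℂ → ℂ} (hP : Differentiable ℂ P)
    (hb : ∀ l : ℂ, ‖l‖ = s → u (z + l • X) ≤ ((Real.log s + (P l).re : ℝ) : EReal)) :
    ∀ l : ℂ, 0 < ‖l‖ → ‖l‖ ≤ s → u (z + l • X) ≤ ((Real.log ‖l‖ + (P l).re : ℝ) : EReal) := by
  intro l0 h0 h0s
  refine EReal_le_of_forall_eps fun η hη => ?_
  have hls : Real.log ‖l0‖ ≤ Real.log s := Real.log_le_log h0 h0s
  obtain ⟨ε, hε, hεη⟩ : ∃ ε : ℝ, 0 < ε ∧ ε * (Real.log s - Real.log ‖l0‖) ≤ η := by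
    refine ⟨η / (Real.log s - Real.log ‖l0‖ + 1), by apply div_pos hη; linarith, ?_⟩
    rw [div_mul_eq_mul_div, div_le_iff₀ (by linarith)]
    nlinarith
  have hPc : Continuous fun l : ℂ => (P l).re := Complex.continuous_re.comp hP.continuous
  have e1 : ∀ᶠ l : ℂ in 𝓝[≠] 0, (P 0).re - 1 < (P l).re :=
    nhdsWithin_le_nhds (hPc.continuousAt.eventually (lt_mem_nhds (by linarith)))
  have e2 : ∀ᶠ l : ℂ in 𝓝[≠] 0,
      Real.log ‖l‖ < Real.log s - (C - ((P 0).re - 1)) / ε := by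
    have : Tendsto (fun l : ℂ => Real.log ‖l‖) (𝓝[≠] 0) atBot :=
      Real.tendsto_log_nhdsGT_zero.comp tendsto_norm_nhdsNE_zero
    exact this.eventually (eventually_lt_atBot _)
  have e3 : ∀ᶠ l : ℂ in 𝓝[≠] 0, u (z + l • X) ≤
      ((Real.log ‖l‖ + ε * (Real.log s - Real.log ‖l‖) + (P l).re : ℝ) : EReal) := by
    filter_upwards [hC, e1, e2] with l k0 k1 k2
    refine k0.trans ?_
    norm_cast
    have : (C - ((P 0).re - 1)) / ε < Real.log s - Real.log ‖l‖ := by linarith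
    rw [div_lt_iff₀ hε] at this
    linarith
  rw [eventually_nhdsWithin_iff, Metric.eventually_nhds_iff] at e3
  obtain ⟨δ, hδ, e4⟩ := e3
  set d := min (δ / 2) ‖l0‖ with hdd
  have hd0 : 0 < d := lt_min (by linarith) h0
  have hdδ : d < δ := (min_le_left _ _).trans_lt (by linarith)
  have hdl : d ≤ ‖l0‖ := min_le_right _ _
  have key := max_principle {l : ℂ | d ≤ ‖l‖ ∧ ‖l‖ ≤ s} {l : ℂ | d < ‖l‖ ∧ ‖l‖ < s} ?_
    (fun l => u (z + l • X)) ?_ ?_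
    (fun l => Real.log ‖l‖ + ε * (Real.log s - Real.log ‖l‖) + (P l).re) ?_ ?_ ?_ l0 ⟨hdl, h0s⟩
  · beta_reduce at key
    refine key.trans ?_
    norm_cast
    linarith
  · apply (isCompact_closedBall (0:ℂ) s).of_isClosed_subset
    · exact (isClosed_le continuous_const continuous_norm).inter
        (isClosed_le continuous_norm continuous_const)
    · intro l hl
      simpa using hl.2
  · exact hu.1.comp (g := fun l : ℂ => z + l • X) (by fun_prop) fun l hl => hd l hl.2
  · intro l hl
    exact (hneg _ (hd l hl.2)).trans (by simp)
  · have : ContinuousOn (fun l : ℂ => Real.log ‖l‖) {l : ℂ | d ≤ ‖l‖ ∧ ‖l‖ ≤ s} := by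
      apply ContinuousOn.log continuous_norm.continuousOn
      intro l hl
      exact (hd0.trans_le hl.1).ne'
    exact (this.add (continuousOn_const.mul (continuousOn_const.sub this))).add hPc.continuousOn
  · intro x hx
    have hopen : IsOpen {l : ℂ | d < ‖l‖ ∧ ‖l‖ < s} :=
      (isOpen_lt continuous_const continuous_norm).inter
        (isOpen_lt continuous_norm continuous_const)
    obtain ⟨t, ht, hts⟩ := Metric.nhds_basis_closedBall.mem_iff.1 (hopen.mem_nhds hx)
    refine ⟨t, ht, fun y hy => ⟨(hts hy).1.le, (hts hy).2.le⟩, ?_, ?_⟩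
    · intro y hy
      have hy0 : y ≠ 0 := norm_pos_iff.1 (hd0.trans (hts hy).1)
      have a1 : InnerProductSpace.HarmonicAt (fun l : ℂ => Real.log ‖l‖) y :=
        AnalyticAt.harmonicAt_log_norm (f := fun l : ℂ => l) analyticAt_id hy0
      have a2 : InnerProductSpace.HarmonicAt (fun l : ℂ => (P l + ((ε * Real.log s : ℝ) : ℂ)).re) y :=
        AnalyticAt.harmonicAt_re
          ((hP.add_const _).analyticAt y)
      have := (InnerProductSpace.HarmonicAt.const_smul (c := 1 - ε) a1).add a2
      convert this using 1
      funext l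
      simp only [Pi.add_apply, Pi.smul_apply, smul_eq_mul, Complex.add_re, Complex.ofReal_re]
      ring
    · intro g hg hug
      refine hu.mean (b := X) (r := t) ht ?_ hg ?_
      · intro y hy
        rw [add_assoc, ← add_smul]
        apply hd
        exact (hts (by simpa using hy : x + y ∈ closedBall x t)).2.le
      · intro θ
        rw [add_assoc, ← add_smul]
        exact hug θ
  · intro x hx hxO
    beta_reduce
    rcases eq_or_lt_of_le hx.1 with h | h
    · apply e4
      · simpa [← h] using hdδ
      · exact norm_pos_iff.1 (h ▸ hd0)
    · have hxs : ‖x‖ = s := by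
        by_contra hne
        exact hxO ⟨h, lt_of_le_of_ne hx.2 hne⟩
      refine (hb x hxs).trans ?_
      rw [hxs]
      norm_cast
      linarith

def Comp {n : ℕ} (D : Set (Cn n)) (z : Cn n) (u : Cn n → EReal) : Prop :=
  PSHOn u D ∧ (∀ x ∈ D, u x < 0) ∧
    (∃ C : ℝ, ∀ᶠ x in 𝓝[D] z, u x ≤ ((Real.log ‖x - z‖ + C : ℝ) : EReal))

lemma green_le {n : ℕ} {D : Set (Cn n)} {z w : Cn n} {c : EReal}
    (h : ∀ u, Comp D z u → u w ≤ c) : greenFn D z w ≤ c := by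
  refine sSup_le ?_
  rintro t ⟨u, h1, h2, h3, rfl⟩
  exact h u ⟨h1, h2, h3⟩

lemma le_green {n : ℕ} {D : Set (Cn n)} {z w : Cn n} {u : Cn n → EReal}
    (h : Comp D z u) : u w ≤ greenFn D z w :=
  le_sSup ⟨u, h.1, h.2.1, h.2.2, rfl⟩

lemma erexp_nonneg (x : EReal) : 0 ≤ erexp x := by
  unfold erexp
  split_ifs
  · exact le_rfl
  · exact le_rfl
  · positivity

lemma erexp_coe (x : ℝ) : erexp (x : EReal) = Real.exp x := by
  simp [erexp]

lemma erexp_le_of_le {x : EReal} {c : ℝ} (h : x ≤ (c : EReal)) : erexp x ≤ Real.exp c := by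
  induction x with
  | bot => simp [erexp, Real.exp_nonneg]
  | top => simp at h
  | coe x =>
    rw [erexp_coe]
    exact Real.exp_le_exp.2 (by exact_mod_cast h)

lemma le_of_erexp_le {x : EReal} {c : ℝ} (hx : x ≠ ⊤) (h : erexp x ≤ Real.exp c) :
    x ≤ (c : EReal) := by
  induction x with
  | bot => simp
  | top => simp at hx
  | coe x =>
    rw [erexp_coe] at h
    exact_mod_cast Real.exp_le_exp.1 h

lemma line_tendsto {n : ℕ} {D : Set (Cn n)} (hD : IsOpen D) {z : Cn n} (hz : z ∈ D) (X : Cn n) :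
    Tendsto (fun l : ℂ => z + l • X) (𝓝[≠] 0) (𝓝[D] z) := by
  rw [hD.nhdsWithin_eq hz]
  have : Continuous (fun l : ℂ => z + l • X) := by fun_prop
  have h := this.tendsto 0
  simp only [zero_smul, add_zero] at h
  exact h.mono_left nhdsWithin_le_nhds

lemma line_pole {n : ℕ} {D : Set (Cn n)} (hD : IsOpen D) {z X : Cn n} (hz : z ∈ D)
    (hX : X ≠ 0) {u : Cn n → EReal} (hu : Comp D z u) :
    ∃ C : ℝ, ∀ᶠ l : ℂ in 𝓝[≠] 0, u (z + l • X) ≤ ((Real.log ‖l‖ + C : ℝ) : EReal) := by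
  obtain ⟨C, hC⟩ := hu.2.2
  refine ⟨Real.log ‖X‖ + C, ?_⟩
  filter_upwards [(line_tendsto hD hz X).eventually hC, self_mem_nhdsWithin] with l hl hl0
  refine hl.trans (le_of_eq ?_)
  have h0 : l ≠ 0 := hl0
  rw [add_sub_cancel_left, norm_smul, Real.log_mul (norm_ne_zero_iff.2 h0) (norm_ne_zero_iff.2 hX)]
  congr 1
  ring

lemma exists_disc {n : ℕ} {D : Set (Cn n)} (hD : IsOpen D) {z : Cn n} (hz : z ∈ D) (X : Cn n)
    {δ : ℝ} (hδ : 0 < δ) :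
    ∃ s : ℝ, 0 < s ∧ s < δ ∧ ∀ t : ℂ, ‖t‖ ≤ s → z + t • X ∈ D := by
  have hc : Continuous (fun l : ℂ => z + l • X) := by fun_prop
  have : ∀ᶠ l : ℂ in 𝓝 0, z + l • X ∈ D :=
    hc.continuousAt.eventually (hD.mem_nhds (by simpa using hz))
  obtain ⟨r, hr, h⟩ := Metric.eventually_nhds_iff.1 this
  refine ⟨min (r / 2) (δ / 2), by positivity, ?_, fun t ht => h ?_⟩
  · exact (min_le_right _ _).trans_lt (by linarith)
  · rw [dist_zero_right]
    exact (ht.trans (min_le_left _ _)).trans_lt (by linarith)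

lemma green_bound {n : ℕ} {D : Set (Cn n)} (hD : IsOpen D) {z X : Cn n}
    (hX : X ≠ 0) {s : ℝ} (hs : 0 < s) (hd : ∀ t : ℂ, ‖t‖ ≤ s → z + t • X ∈ D) {l : ℂ}
    (hl : 0 < ‖l‖) (hls : ‖l‖ ≤ s) :
    greenFn D z (z + l • X) ≤ ((Real.log ‖l‖ - Real.log s : ℝ) : EReal) := by
  refine green_le fun u hu => ?_
  have hz : z ∈ D := by simpa using hd 0 (by simpa using hs.le)
  obtain ⟨C, hC⟩ := line_pole hD hz hX hu
  have := logpole hu.1 hu.2.1 hd hC (P := fun _ => ((- Real.log s : ℝ) : ℂ)) (by fun_prop) (by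
    intro l hl
    rw [Complex.ofReal_re, add_neg_cancel]
    exact (hu.2.1 _ (hd l hl.le)).le) l hl hls
  rwa [Complex.ofReal_re, ← sub_eq_add_neg] at this

lemma az_bound {n : ℕ} {D : Set (Cn n)} (hD : IsOpen D) {z X : Cn n} (hz : z ∈ D) (hX : X ≠ 0) :
    IsBoundedUnder (· ≤ ·) (𝓝[≠] (0:ℂ))
      (fun lam : ℂ => erexp (greenFn D z (z + lam • X)) / ‖lam‖) := by
  obtain ⟨s, hs, -, hd⟩ := exists_disc hD hz X one_pos
  refine ⟨1 / s, ?_⟩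
  rw [eventually_map]
  have : ∀ᶠ l : ℂ in 𝓝[≠] 0, ‖l‖ < s := by
    apply nhdsWithin_le_nhds
    filter_upwards [Metric.ball_mem_nhds (0:ℂ) hs] with l hl
    simpa using hl
  filter_upwards [this, self_mem_nhdsWithin] with l h1 h2
  have h0 : 0 < ‖l‖ := norm_pos_iff.2 h2
  have := erexp_le_of_le (green_bound hD hX hs hd h0 h1.le)
  rw [Real.exp_sub, Real.exp_log h0, Real.exp_log hs] at this
  rw [div_le_iff₀ h0]
  calc _ ≤ _ := this
    _ = _ := by ring

lemma az_cobound {n : ℕ} (D : Set (Cn n)) (z X : Cn n) :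
    IsCoboundedUnder (· ≤ ·) (𝓝[≠] (0:ℂ))
      (fun lam : ℂ => erexp (greenFn D z (z + lam • X)) / ‖lam‖) := by
  refine IsBoundedUnder.isCoboundedUnder_le ⟨0, ?_⟩
  rw [eventually_map]
  exact Eventually.of_forall fun l => div_nonneg (erexp_nonneg _) (norm_nonneg _)

lemma az_zero {n : ℕ} (D : Set (Cn n)) (z : Cn n) : azukawa D z 0 = 0 := by
  unfold azukawa
  simp only [smul_zero, add_zero]
  rcases (erexp_nonneg (greenFn D z z)).eq_or_lt with h | h
  · simp [← h]
  · rw [Filter.limsup_eq]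
    suffices hemp : {a : ℝ | ∀ᶠ l : ℂ in 𝓝[≠] 0, erexp (greenFn D z z) / ‖l‖ ≤ a} = ∅ by
      rw [hemp]
      exact Real.sInf_empty
    rw [Set.eq_empty_iff_forall_notMem]
    intro a ha
    have ha' : ∀ᶠ l : ℂ in 𝓝[≠] 0, erexp (greenFn D z z) / ‖l‖ ≤ a := ha
    have ht : Tendsto (fun l : ℂ => erexp (greenFn D z z) / ‖l‖) (𝓝[≠] 0) atTop :=
      (tendsto_inv_nhdsGT_zero.comp tendsto_norm_nhdsNE_zero).const_mul_atTop h
    obtain ⟨l, h1, h2⟩ := (ha'.and (ht.eventually (eventually_gt_atTop a))).exists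
    linarith

lemma re_le_of_circle {P : ℂ → ℂ} (hP : Differentiable ℂ P) {s N : ℝ} (hs : 0 < s)
    (hN : ∀ l : ℂ, ‖l‖ = s → (P l).re ≤ N) {l : ℂ} (hl : ‖l‖ ≤ s) : (P l).re ≤ N := by
  have := Complex.norm_le_of_forall_mem_frontier_norm_le (f := fun l => Complex.exp (P l))
    (U := ball (0:ℂ) s) isBounded_ball hP.cexp.diffContOnCl (C := Real.exp N) ?_ (z := l) ?_
  · rw [Complex.norm_exp] at this
    exact Real.exp_le_exp.1 this
  · intro w hw
    rw [frontier_ball _ hs.ne'] at hw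
    rw [Complex.norm_exp]
    exact Real.exp_le_exp.2 (hN w (by simpa using hw))
  · rw [closure_ball _ hs.ne']
    simpa using hl

lemma re_le_small {P : ℂ → ℂ} (hP : Differentiable ℂ P) {s ε : ℝ} (hs : 0 < s) (hε : 0 < ε)
    (hN : ∀ l : ℂ, ‖l‖ = s → (P l).re ≤ ε) {A : ℝ} (hA : (P 0).re ≤ A) {l : ℂ}
    (hl : ‖l‖ ≤ s / 3) :
    (P l).re ≤ A + 3 * |2 * ε - A| / s * ‖l‖ := by
  have hls : ‖l‖ < s := by linarith
  have h0 : (P 0).re ≤ ε := re_le_of_circle hP hs hN (by simpa using hs.le)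
  have hB := Complex.borelCaratheodory_zero (f := fun l => P l - P 0) (R := s)
    (M := 2 * ε - (P 0).re) (z := l) (by linarith) (by fun_prop) (by
      intro x hx
      have hx' : ‖x‖ < s := by simpa using hx
      have := re_le_of_circle hP hs hN hx'.le
      simp only [Set.mem_ofPred_eq, Complex.sub_re]
      linarith) hs (by simpa using hls) (by simp)
  have h1 : (P l).re - (P 0).re ≤ ‖P l - P 0‖ := by
    rw [← Complex.sub_re]; exact Complex.re_le_norm _
  have hpos : 0 < s - ‖l‖ := by linarith
  obtain ⟨k, hk⟩ : ∃ k : ℝ, k = 2 * ‖l‖ / (s - ‖l‖) := ⟨_, rfl⟩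
  have hk0 : 0 ≤ k := by rw [hk]; positivity
  have hk1 : k ≤ 1 := by rw [hk, div_le_one hpos]; linarith
  have hk3 : k ≤ 3 / s * ‖l‖ := by
    rw [hk, div_mul_eq_mul_div, div_le_div_iff₀ hpos hs]
    nlinarith [norm_nonneg l]
  have e : 2 * (2 * ε - (P 0).re) * ‖l‖ / (s - ‖l‖) = k * (2 * ε - (P 0).re) := by
    rw [hk]; ring
  have hB' : ‖P l - P 0‖ ≤ k * (2 * ε - (P 0).re) := by rw [← e]; exact hB
  have h2 : (P l).re ≤ A + k * (2 * ε - A) := by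
    nlinarith [mul_nonneg (sub_nonneg.2 hk1) (sub_nonneg.2 hA)]
  have h3 : k * (2 * ε - A) ≤ k * |2 * ε - A| := mul_le_mul_of_nonneg_left (le_abs_self _) hk0
  have h4 : k * |2 * ε - A| ≤ 3 / s * ‖l‖ * |2 * ε - A| :=
    mul_le_mul_of_nonneg_right hk3 (abs_nonneg _)
  calc _ ≤ _ := h2
    _ ≤ A + 3 / s * ‖l‖ * |2 * ε - A| := by linarith
    _ = _ := by ring

lemma core {n : ℕ} {E : Set (Cn n)} (hE : IsOpen E) {z X : Cn n} (hX : X ≠ 0)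
    {ψ : Cn n → EReal} {W : Set (Cn n)} (hψ : PSHOn ψ W) (hψt : ∀ x ∈ W, ψ x < ⊤) {a : ℝ}
    (ha : ψ z = (a : EReal))
    {s : ℝ} (hs : 0 < s) (hd : ∀ t : ℂ, ‖t‖ ≤ s → z + t • X ∈ E)
    (hdW : ∀ t : ℂ, ‖t‖ ≤ s → z + t • X ∈ W) {b ε : ℝ} (hε : 0 < ε)
    {u : Cn n → EReal} (hu : Comp E z u)
    (hb : ∀ l : ℂ, ‖l‖ = s → u (z + l • X) + ψ (z + l • X) ≤ ((Real.log s + b : ℝ) : EReal))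
    {l : ℂ} (hl0 : 0 < ‖l‖) (hl : ‖l‖ ≤ s / 3) :
    u (z + l • X) ≤ ((Real.log ‖l‖ + (b - a + 2 * ε +
      3 * |2 * ε - (Real.log s + b - a + 2 * ε)| / s * ‖l‖) : ℝ) : EReal) := by
  have hz : z ∈ E := by simpa using hd 0 (by simpa using hs.le)
  obtain ⟨C, hC⟩ := line_pole hE hz hX hu
  obtain ⟨g₁, g₂, c1, c2, k1, k2, k3⟩ := insertion _ _ (usc_circ hu.1.1 hs hd)
    (usc_circ hψ.1 hs hdW)
    (fun θ => (hu.2.1 _ (hd _ (norm_circ hs θ).le)).trans (by simp))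
    (fun θ => hψt _ (hdW _ (norm_circ hs θ).le))
    (fun _ => Real.log s + b + ε) continuous_const
    (fun θ => EReal_lt_coe_add_eps hε (hb _ (norm_circ hs θ)))
  have m2 := hψ.mean hs hdW c2 k2
  rw [ha] at m2
  have m2' : a ≤ avg g₂ := by exact_mod_cast m2
  have m3 : avg g₁ + avg g₂ = Real.log s + b + ε := by
    rw [← avg_add c1 c2, ← avg_const (Real.log s + b + ε)]
    congr 1
    funext θ
    exact k3 θ
  obtain ⟨P, hP, q1, q2, q3⟩ := exists_harmonic_majorant
    (fun θ : ℝ => u (z + ((s : ℂ) * Complex.exp (θ * Complex.I)) • X))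
    (periodic_circ (fun w => u (z + w • X)) s) g₁ c1 k1 0
    (fun θ => (hu.2.1 _ (hd _ (norm_circ hs θ).le)).le) ε hε s hs
  have hN : ∀ l : ℂ, ‖l‖ = s → (P l).re ≤ ε := by
    intro l hl
    have := q2 l.arg
    rw [circ_of_norm hl] at this
    linarith
  have hL := logpole hu.1 hu.2.1 hd hC (P := fun w => P w - ((Real.log s : ℝ) : ℂ)) (by fun_prop) (by
    intro l hl
    have := q1 l.arg
    beta_reduce at this
    rw [circ_of_norm hl] at this
    rw [Complex.sub_re, Complex.ofReal_re, add_sub_cancel]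
    exact this) l hl0 (by linarith)
  refine hL.trans ?_
  have := re_le_small hP hs hε hN (A := Real.log s + b - a + 2 * ε) (by linarith) hl
  rw [Complex.sub_re, Complex.ofReal_re]
  norm_cast
  linarith

lemma az_compare {n : ℕ} {D E W : Set (Cn n)} (hD : IsOpen D) (hE : IsOpen E) (hW : IsOpen W)
    (hWD : W ⊆ D) (hWE : W ⊆ E) {z X : Cn n} (hX : X ≠ 0) (hz : z ∈ W)
    {ψ : Cn n → EReal} (hψ : PSHOn ψ W) (hψt : ∀ x ∈ W, ψ x < ⊤) {a : ℝ}
    (ha : ψ z = (a : EReal))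
    (h : ∀ u, Comp E z u → ∀ w ∈ W, u w + ψ w ≤ greenFn D z w) :
    Real.exp a * azukawa E z X ≤ azukawa D z X := by
  by_contra hcon
  rw [not_le] at hcon
  have hB0 : 0 ≤ azukawa D z X :=
    le_limsup_of_frequently_le
      (Frequently.of_forall fun l => div_nonneg (erexp_nonneg _) (norm_nonneg _))
      (az_bound hD (hWD hz) hX)
  obtain ⟨B, hB1, hB2⟩ := exists_between hcon
  have hBpos : 0 < B := hB0.trans_lt hB1
  have hAE : Real.exp (Real.log B - a) < azukawa E z X := by
    rw [Real.exp_sub, Real.exp_log hBpos, div_lt_iff₀ (Real.exp_pos a)]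
    linarith
  have hAEpos : 0 < azukawa E z X := (Real.exp_pos _).trans hAE
  have hlog : Real.log B - a < Real.log (azukawa E z X) := (Real.lt_log_iff_exp_lt hAEpos).2 hAE
  set ε := (Real.log (azukawa E z X) - (Real.log B - a)) / 4 with hεdef
  have hε : 0 < ε := by rw [hεdef]; linarith
  have hev : ∀ᶠ l : ℂ in 𝓝[≠] 0, erexp (greenFn D z (z + l • X)) / ‖l‖ < B :=
    eventually_lt_of_limsup_lt hB1 (az_bound hD (hWD hz) hX)
  rw [eventually_nhdsWithin_iff, Metric.eventually_nhds_iff] at hev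
  obtain ⟨δ, hδ, hev⟩ := hev
  obtain ⟨s, hs, hsδ, hd⟩ := exists_disc hW hz X hδ
  have hgreen : ∀ l : ℂ, ‖l‖ = s →
      greenFn D z (z + l • X) ≤ ((Real.log s + Real.log B : ℝ) : EReal) := by
    intro l hl
    have hl0 : 0 < ‖l‖ := hl ▸ hs
    have h1 := hev (y := l) (by simpa [hl] using hsδ) (norm_pos_iff.1 hl0)
    have h2 := green_bound hD hX hs (fun t ht => hWD (hd t ht)) hl0 hl.le
    refine le_of_erexp_le (h2.trans_lt (EReal.coe_lt_top _)).ne ?_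
    rw [Real.exp_add, Real.exp_log hs, Real.exp_log hBpos]
    rw [div_lt_iff₀ hl0, hl] at h1
    linarith
  set Q := 3 * |2 * ε - (Real.log s + Real.log B - a + 2 * ε)| / s with hQ
  have hQ0 : 0 ≤ Q := by positivity
  have hfin : ∀ᶠ l : ℂ in 𝓝[≠] 0, erexp (greenFn E z (z + l • X)) / ‖l‖ ≤
      Real.exp (Real.log B - a + 3 * ε) := by
    have e1 : ∀ᶠ l : ℂ in 𝓝[≠] 0, ‖l‖ < min (s / 3) (ε / (Q + 1)) := by
      apply nhdsWithin_le_nhds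
      filter_upwards [Metric.ball_mem_nhds (0:ℂ) (show 0 < min (s / 3) (ε / (Q + 1)) by
        positivity)] with l hl
      simpa using hl
    filter_upwards [e1, self_mem_nhdsWithin] with l h1 h2
    have hl0 : 0 < ‖l‖ := norm_pos_iff.2 h2
    have h3 : Q * ‖l‖ ≤ ε := by
      have := h1.le.trans (min_le_right _ _)
      rw [le_div_iff₀ (by linarith)] at this
      nlinarith
    have h4 : greenFn E z (z + l • X) ≤
        ((Real.log ‖l‖ + (Real.log B - a + 3 * ε) : ℝ) : EReal) := by
      refine green_le fun u hu => ?_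
      have := core hE hX hψ hψt ha hs (fun t ht => hWE (hd t ht)) hd (b := Real.log B) hε hu
        (fun l hl => (h u hu _ (hd l hl.le)).trans (hgreen l hl)) hl0
        (h1.le.trans (min_le_left _ _))
      refine this.trans ?_
      rw [← hQ]
      norm_cast
      linarith
    have h5 := erexp_le_of_le h4
    rw [Real.exp_add, Real.exp_log hl0] at h5
    rw [div_le_iff₀ hl0]
    linarith
  have hle : azukawa E z X ≤ Real.exp (Real.log B - a + 3 * ε) :=
    limsup_le_of_le (az_cobound E z X) hfin
  have : Real.log (azukawa E z X) ≤ Real.log B - a + 3 * ε :=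
    (Real.log_le_iff_le_exp hAEpos).2 hle
  linarith

lemma glue {n : ℕ} {D U : Set (Cn n)} (hD : IsOpen D) (hU : IsOpen U) {p z : Cn n}
    {φ : Cn n → EReal} (hφ : PSHOn φ D) (hφ0 : ∀ x ∈ D, φ x < 0) {ρ ρU c R M : ℝ}
    (hρ : 0 < ρ) (hρU : ρ ≤ ρU) (hUU : closedBall p ρU ⊆ U) (hc : 0 < c) (hM : 0 < M)
    (hR : 0 < R)
    (h1 : ∀ x ∈ D, x ∉ ball p ρU → φ x ≤ ((-c : ℝ) : EReal))
    (h2 : ∀ x ∈ D, x ∈ ball p ρ → ((-(c / 2) : ℝ) : EReal) ≤ φ x)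
    (hRU : ∀ x ∈ U, ‖x - z‖ < R) (hK : Real.log R - Real.log (ρ / 4) ≤ M * c / 2)
    (hzD : z ∈ D) (hz : z ∈ ball p (ρ / 4)) {u : Cn n → EReal} (hu : Comp (D ∩ U) z u) :
    ∃ v, Comp D z v ∧ ∀ w ∈ D ∩ ball p ρ, u w + (M : EReal) * φ w ≤ v w := by
  have hell : ∀ x ∈ U, ell z R x < 0 := by
    intro x hx
    by_cases hxz : x = z
    · rw [hxz, ell_self]; simp
    · rw [ell_of_ne hR hxz]
      have := Real.log_lt_log (norm_pos_iff.2 (sub_ne_zero.2 hxz)) (hRU x hx)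
      norm_cast
      linarith
  have hMφ : ∀ x ∈ D, (M : EReal) * φ x < 0 := by
    intro x hx
    have := (mul_lt_coe_iff hM (φ x) 0).2 (by simpa using hφ0 x hx)
    simpa using this
  obtain ⟨w1, hw1⟩ : ∃ w1 : Cn n → EReal,
    ∀ x, w1 x = max (u x) (ell z R x) + (M : EReal) * φ x := ⟨_, fun _ => rfl⟩
  have hmax : ∀ x ∈ D ∩ U, max (u x) (ell z R x) < 0 := fun x hx =>
    max_lt (hu.2.1 x hx) (hell x hx.2)
  have hw1neg : ∀ x ∈ D ∩ U, w1 x < 0 := by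
    intro x hx
    rw [hw1]
    simpa using EReal.add_lt_add (hmax x hx) (hMφ x hx.1)
  have hw1psh : PSHOn w1 (D ∩ U) := by
    refine PSHOn.congr' ((hu.1.sup (ell_psh z hR)).add' ((hφ.mono' inter_subset_left).smul hM)
      (fun x hx => (hmax x hx).trans (by simp))
      (fun x hx => (hMφ x hx.1).trans (by simp))) fun x _ => hw1 x
  have hL : ((-(M * c) : ℝ) : EReal) < 0 := by
    norm_cast
    have := mul_pos hM hc
    linarith
  have hballU : ball p ρ ⊆ U := fun x hx => hUU (ball_subset_closedBall (ball_subset_ball hρU hx))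
  have hzρ : z ∈ ball p ρ := ball_subset_ball (by linarith) hz
  obtain ⟨v, hv⟩ : ∃ v : Cn n → EReal, ∀ x, v x = if x ∈ U then
      (if x ∈ ball p ρ then w1 x else max (w1 x) ((-(M * c) : ℝ) : EReal))
      else ((-(M * c) : ℝ) : EReal) := ⟨_, fun _ => rfl⟩
  have hvin : ∀ x ∈ ball p ρ, v x = w1 x := by
    intro x hx
    rw [hv, if_pos (hballU hx), if_pos hx]
  have hvneg : ∀ x ∈ D, v x < 0 := by
    intro x hx
    rw [hv]
    split_ifs with k1 k2
    · exact hw1neg x ⟨hx, k1⟩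
    · exact max_lt (hw1neg x ⟨hx, k1⟩) hL
    · exact hL
  refine ⟨v, ⟨PSHOn.of_local hvneg ?_, hvneg, ?_⟩, ?_⟩
  · intro x hx
    by_cases hxρ : x ∈ ball p ρ
    · refine ⟨D ∩ ball p ρ, hD.inter isOpen_ball, ⟨hx, hxρ⟩, inter_subset_left, ?_⟩
      refine PSHOn.congr' (hw1psh.mono' fun y hy => ⟨hy.1, hballU hy.2⟩) fun y hy => hvin y hy.2
    by_cases hxU : x ∈ U
    · refine ⟨(D ∩ U) ∩ (closedBall p (ρ / 2))ᶜ,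
        (hD.inter hU).inter isClosed_closedBall.isOpen_compl, ⟨⟨hx, hxU⟩, ?_⟩,
        fun y hy => hy.1.1, ?_⟩
      · intro hx'
        exact hxρ (closedBall_subset_ball (by linarith) hx')
      · refine PSHOn.congr' ((hw1psh.mono' inter_subset_left).sup (PSHOn.const (-(M * c))))
          fun y hy => ?_
        rw [hv, if_pos hy.1.2]
        split_ifs with k
        · symm
          apply max_eq_left
          have hyp : ρ / 2 < dist y p := by simpa using hy.2
          have hzp : dist z p < ρ / 4 := hz
          have hyz : ρ / 4 ≤ ‖y - z‖ := by
            rw [← dist_eq_norm]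
            linarith [dist_triangle y z p]
          have hne : y ≠ z := by
            rintro rfl
            simp at hyz
            linarith
          have b1 : ((Real.log (ρ / 4) - Real.log R : ℝ) : EReal) ≤ max (u y) (ell z R y) := by
            refine le_trans ?_ (le_max_right _ _)
            rw [ell_of_ne hR hne]
            have := Real.log_le_log (by linarith) hyz
            norm_cast
            linarith
          have b2 : ((M * (-(c / 2)) : ℝ) : EReal) ≤ (M : EReal) * φ y := by
            rw [EReal.coe_mul]
            exact mul_le_mul_of_nonneg_left (h2 y hy.1.1 k) (by exact_mod_cast hM.le)
          rw [hw1]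
          refine le_trans ?_ (add_le_add b1 b2)
          norm_cast
          linarith
        · rfl
    · refine ⟨D ∩ (closedBall p ρU)ᶜ, hD.inter isClosed_closedBall.isOpen_compl,
        ⟨hx, fun h => hxU (hUU h)⟩, inter_subset_left, ?_⟩
      refine PSHOn.congr' (PSHOn.const (-(M * c))) fun y hy => ?_
      rw [hv]
      have hyb : y ∉ ball p ρU := fun h => hy.2 (ball_subset_closedBall h)
      split_ifs with k1 k2
      · exact absurd (ball_subset_ball hρU k2) hyb
      · apply max_eq_right
        have b2 : (M : EReal) * φ y ≤ ((-(M * c) : ℝ) : EReal) := by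
          rw [mul_le_coe_iff hM]
          refine (h1 y hy.1 hyb).trans (le_of_eq ?_)
          congr 1
          field_simp
        rw [hw1]
        calc _ ≤ 0 + ((-(M * c) : ℝ) : EReal) := add_le_add (hmax y ⟨hy.1, k1⟩).le b2
          _ = _ := zero_add _
      · rfl
  · obtain ⟨C, hC⟩ := hu.2.2
    refine ⟨max C (-Real.log R), ?_⟩
    have hzU : z ∈ U := hballU hzρ
    rw [(hD.inter hU).nhdsWithin_eq ⟨hzD, hzU⟩] at hC
    rw [hD.nhdsWithin_eq hzD]
    filter_upwards [hC, isOpen_ball.mem_nhds hzρ, hD.mem_nhds hzD] with x k1 k2 k3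
    rw [hvin x k2, hw1]
    have b1 : max (u x) (ell z R x) ≤
        ((Real.log ‖x - z‖ + max C (-Real.log R) : ℝ) : EReal) := by
      refine max_le (k1.trans ?_) ?_
      · have := le_max_left C (-Real.log R)
        norm_cast
        linarith
      · by_cases hxz : x = z
        · rw [hxz, ell_self]; exact bot_le
        · rw [ell_of_ne hR hxz]
          have := le_max_right C (-Real.log R)
          norm_cast
          linarith
    calc _ ≤ _ + 0 := add_le_add b1 (hMφ x k3).le
      _ = _ := add_zero _
  · intro w hw
    rw [hvin w hw.2, hw1]
    exact add_le_add (le_max_left _ _) le_rfl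

/-- Quantitative localization of the Azukawa metric near a psh peak
boundary point. -/
theorem azukawa_localization_peak {n : ℕ} (D : Set (Cn n)) (hD : IsOpen D)
    (hDconn : IsConnected D) (p : Cn n) (hp : p ∈ frontier D)
    (φ : Cn n → EReal) (hφ : IsPshPeakFn D p φ)
    (U : Set (Cn n)) (hU : IsOpen U) (hUb : Bornology.IsBounded U) (hpU : p ∈ U) :
    ∃ V : Set (Cn n), IsOpen V ∧ p ∈ V ∧ V ⊆ U ∧ ∃ m : ℝ, 0 < m ∧
      ∀ z ∈ D ∩ V, ∀ X : Cn n,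
        azukawa D z X ≥ erexp ((m : EReal) * φ z) * azukawa (D ∩ U) z X := by
  obtain ⟨hpsh, htend, hpeak⟩ := hφ
  have hpD : p ∉ D := by
    intro h
    rw [hD.frontier_eq] at hp
    exact hp.2 h
  have hφ0 : ∀ x ∈ D, φ x < 0 := by
    intro x hx
    have hne : p ≠ x := fun h => hpD (h ▸ hx)
    obtain ⟨c, hc, h⟩ := hpeak {x}ᶜ (isOpen_compl_singleton.mem_nhds hne)
    exact (h x ⟨hx, by simp⟩).trans_lt (by exact_mod_cast hc)
  obtain ⟨ρU, hρU, hUU⟩ := Metric.nhds_basis_closedBall.mem_iff.1 (hU.mem_nhds hpU)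
  obtain ⟨c', hc', h1'⟩ := hpeak _ (ball_mem_nhds p hρU)
  obtain ⟨c, rfl⟩ : ∃ c : ℝ, c' = -c := ⟨-c', by ring⟩
  have hc : 0 < c := by linarith
  have hev : ∀ᶠ x in 𝓝[D] p, ((-(c / 2) : ℝ) : EReal) < φ x :=
    htend.eventually (lt_mem_nhds (by norm_cast; linarith))
  rw [eventually_nhdsWithin_iff, Metric.eventually_nhds_iff] at hev
  obtain ⟨ρ', hρ', hev⟩ := hev
  set ρ := min ρ' ρU with hρdef
  have hρ : 0 < ρ := lt_min hρ' hρU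
  have hρle : ρ ≤ ρU := min_le_right _ _
  have h2 : ∀ x ∈ D, x ∈ ball p ρ → ((-(c / 2) : ℝ) : EReal) ≤ φ x := by
    intro x hx hxb
    exact (hev ((mem_ball.1 hxb).trans_le (min_le_left _ _)) hx).le
  obtain ⟨R0, hR0⟩ := hUb.subset_ball p
  have hR0pos : 0 < R0 := by simpa using hR0 hpU
  have hKpos : 0 < Real.log (R0 + ρ) - Real.log (ρ / 4) := by
    have := Real.log_lt_log (show 0 < ρ / 4 by linarith) (show ρ / 4 < R0 + ρ by linarith)
    linarith
  set M := 2 * (Real.log (R0 + ρ) - Real.log (ρ / 4)) / c with hMdef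
  have hM : 0 < M := by positivity
  refine ⟨ball p (ρ / 4), isOpen_ball, mem_ball_self (by linarith),
    fun x hx => hUU (ball_subset_closedBall (ball_subset_ball (by linarith) hx)), M, hM, ?_⟩
  rintro z ⟨hzD, hz⟩ X
  by_cases hX : X = 0
  · rw [hX, az_zero, az_zero, mul_zero]
  have hzρ : z ∈ ball p ρ := ball_subset_ball (by linarith) hz
  have hb1 := h2 z hzD hzρ
  have hb2 := hφ0 z hzD
  obtain ⟨a, ha⟩ : ∃ a : ℝ, φ z = (a : EReal) := by
    refine ⟨(φ z).toReal, (EReal.coe_toReal (hb2.trans (by simp)).ne ?_).symm⟩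
    exact ((EReal.bot_lt_coe _).trans_le hb1).ne'
  have ha' : (M : EReal) * φ z = ((M * a : ℝ) : EReal) := by rw [ha, EReal.coe_mul]
  rw [ha', erexp_coe]
  have hWU : D ∩ ball p ρ ⊆ D ∩ U := fun x hx =>
    ⟨hx.1, hUU (ball_subset_closedBall (ball_subset_ball hρle hx.2))⟩
  refine az_compare hD (hD.inter hU) (hD.inter isOpen_ball) inter_subset_left hWU hX ⟨hzD, hzρ⟩
    (ψ := fun x => (M : EReal) * φ x) ((hpsh.mono' inter_subset_left).smul hM) ?_ ha' ?_
  · intro x hx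
    have := (mul_lt_coe_iff hM (φ x) 0).2 (by simpa using hφ0 x hx.1)
    exact this.trans (EReal.coe_lt_top _)
  · intro u hu w hw
    obtain ⟨v, hv, hvw⟩ := glue hD hU hpsh hφ0 hρ hρle hUU hc hM (R := R0 + ρ) (by linarith)
      (fun x hx hxb => h1' x ⟨hx, hxb⟩) h2 (by
        intro x hx
        have k1 : dist x p < R0 := hR0 hx
        have k2 : dist z p < ρ / 4 := hz
        rw [← dist_eq_norm]
        linarith [dist_triangle x p z, dist_comm p z]) (by
        rw [hMdef]
        field_simp
        exact le_rfl) hzD hz hu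
    exact (hvw w hw).trans (le_green hv)
end
end
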